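/- arXiv:2210.09093 — 3 statements merged into one kernel-verified Lean document; each statement's English description precedes it below -/
import Mathlib

section
/- Let k ≥ 2 be an integer and A > 0. There exists a constant B > 0, depending only on A and k, with the following property. Let [a,b] be a compact interval, let f : [a,b] → ℝ be k times continuously differentiable (hence at least C²) with sup_{x∈[a,b]} |f^{(k)}(x)| < A · inf_{x∈[a,b]} |f^{(k)}(x)| (in particular f^{(k)} is nonvanishing on [a,b]), and let φ : [a,b] → ℂ be C¹. Then |∫_a^b e^{i f(x)} φ(x) dx| ≤ B (‖φ‖_{L^∞} + ‖φ'‖_{L^1}) ( ∫_a^b min(1, |f''(x)| / (f'(x))²) dx + min( b − a, 1 / sup_{x∈[a,b]} |f'(x)| ) ). -/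
open Set MeasureTheory

/-!
Write `g = f'`, `h = f''` and `w = min (1, |h| / g²)`.

*Rigidity of `h`.* The top derivative of `f` has comparable values, so by the mean value theorem for
iterated differences `|Δₛⁿ h (x)| ≤ A |Δₛⁿ h (x + s)|` with `n = k - 2`. Expanding both sides gives
`|h x| ≤ C ∑ |h (x + j s)|`, `1 ≤ j ≤ n + 1`, for all `x` and `s`. This survives the truncation
`min (1, |h| / Λ)`, and averaging over `s` bounds a value of the truncation by its mean over an
interval, even one with a short initial piece removed. Boundary effects are avoided by extending `f`
to `ℝ`, the top derivative of the extension taking only values taken on `[a, b]`.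

*One-sided estimate.* If `g x ≠ 0` then `|∫_x^b e^{if}| ≤ K ∫_x^b w + 3 / |g x|`. From `x`, move
right to the first point `y` with `g² ≤ |h|`. On `[x, y]` one has `w = |h| / g²`, and integration by
parts costs `2 / |g x| + 2 ∫_x^y w`, while `1 / |g y| ≤ 1 / |g x| + ∫_x^y w`. From `y`, let `r` be
the first length with `r |g (y + r)| = 1`. Then `|h| ≥ 1 / (4 r²)` somewhere in `[y, y + r]`: at `y`
itself, or else `|g y| < 1 / (2 r)` and `|g|` grows to `1 / r`. As `|g (y + t)| ≤ 1 / t` on this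
interval, the rigidity of `h` gives `r ≤ D ∫_y^{y+r} w`, which pays both for the trivial bound on
`[y, y + r]` and for the term `3 / |g (y + r)| = 3 r` with which one restarts at `y + r`. Each `r`
is at least `1 / max |g|`, so the process ends at `b`.

*Amplitude.* Applied from a maximum point of `|g|`, to the right and after reflection to the left,
the estimate bounds the primitive of `e^{if}` uniformly, and integration by parts brings in `φ`. If
`b - a ≤ 1 / max |g|`, or if `g` vanishes identically, the trivial bound suffices.
-/

section Extension

variable {E : Type*} [NormedAddCommGroup E] [NormedSpace ℝ E] [CompleteSpace E]

theorem add_integral_derivWithin_eqOn {u G : ℝ → E} {a b : ℝ}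
    (hu : DifferentiableOn ℝ u (Icc a b)) (hG : Continuous G)
    (hGu : EqOn G (derivWithin u (Icc a b)) (Icc a b)) :
    EqOn (fun x => u a + ∫ t in a..x, G t) u (Icc a b) := by
  intro x hx
  have hsub : Icc a x ⊆ Icc a b := Icc_subset_Icc_right hx.2
  have hint : ∫ t in a..x, G t = u x - u a := by
    refine intervalIntegral.integral_eq_sub_of_hasDeriv_right_of_le hx.1
      (hu.continuousOn.mono hsub) (fun t ht => ?_) (hG.intervalIntegrable _ _)
    have htb : t ∈ Icc a b := hsub (Ioo_subset_Icc_self ht)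
    rw [hGu htb]
    exact ((hu t htb).hasDerivWithinAt.hasDerivAt
      (Icc_mem_nhds ht.1 (ht.2.trans_le hx.2))).hasDerivWithinAt
  simp only [hint, add_sub_cancel]

/-- Extend the `n`-th derivative by constants and integrate back. -/
theorem exists_contDiff_extension {a b : ℝ} (hab : a < b) (n : ℕ) {u : ℝ → E}
    (hu : ContDiffOn ℝ n u (Icc a b)) :
    ∃ F : ℝ → E, ContDiff ℝ n F ∧ EqOn F u (Icc a b) ∧
      ∀ x, iteratedDeriv n F x ∈ iteratedDerivWithin n u (Icc a b) '' Icc a b := by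
  induction n generalizing u with
  | zero =>
    refine ⟨IccExtend hab.le ((Icc a b).domRestrict u), ?_, fun x hx => ?_, fun x => ?_⟩
    · exact contDiff_zero.2 hu.continuousOn.domRestrict.Icc_extend'
    · rw [IccExtend_of_mem hab.le _ hx, Set.domRestrict_apply]
    · rw [iteratedDeriv_zero, iteratedDerivWithin_zero]
      exact ⟨_, (projIcc a b hab.le x).2, rfl⟩
  | succ n ih =>
    rw [Nat.cast_succ, contDiffOn_succ_iff_derivWithin (uniqueDiffOn_Icc hab)] at hu
    obtain ⟨hd, -, hd'⟩ := hu
    obtain ⟨G, hG, hGu, hGmem⟩ := ih hd'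
    have hder : ∀ x, HasDerivAt (fun x => u a + ∫ t in a..x, G t) (G x) x := fun x =>
      (hG.continuous.integral_hasStrictDerivAt a x).hasDerivAt.const_add _
    have hderiv : deriv (fun x => u a + ∫ t in a..x, G t) = G := funext fun x => (hder x).deriv
    refine ⟨fun x => u a + ∫ t in a..x, G t, ?_,
      add_integral_derivWithin_eqOn hd hG.continuous hGu, fun x => ?_⟩
    · rw [Nat.cast_succ, contDiff_succ_iff_deriv]
      exact ⟨fun x => (hder x).differentiableAt, by simp, by rwa [hderiv]⟩
    · rw [iteratedDeriv_succ', hderiv, iteratedDerivWithin_succ']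
      exact hGmem x

end Extension

section ForwardDifferences

theorem exists_add_sub_eq_mul_deriv {u : ℝ → ℝ} (hu : Differentiable ℝ u) (x s : ℝ) :
    ∃ ξ, u (x + s) - u x = s * deriv u ξ := by
  have hder (t : ℝ) : HasDerivAt (fun t => u (x + t * s)) (s * deriv u (x + t * s)) t := by
    simpa [Function.comp_def, mul_comm] using
      (hu (x + t * s)).hasDerivAt.scomp t (((hasDerivAt_id t).mul_const s).const_add x)
  obtain ⟨t, -, ht⟩ := exists_hasDerivAt_eq_slope (fun t => u (x + t * s)) _ one_pos
    (continuous_iff_continuousAt.2 fun t => (hder t).continuousAt).continuousOn fun t _ => hder t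
  exact ⟨x + t * s, by simpa using ht.symm⟩

theorem exists_fwdDiff_iter_eq_pow_mul_iteratedDeriv {n : ℕ} {u : ℝ → ℝ} (hu : ContDiff ℝ n u)
    (x s : ℝ) : ∃ ξ, (fwdDiff s)^[n] u x = s ^ n * iteratedDeriv n u ξ := by
  induction n generalizing u with
  | zero => exact ⟨x, by simp⟩
  | succ n ih =>
    have hun : ContDiff ℝ n u := hu.of_le (by exact_mod_cast n.le_succ)
    have hshift : ContDiff ℝ n (fun z => u (z + s)) := hun.comp (contDiff_id.add contDiff_const)
    obtain ⟨ξ, hξ⟩ := ih (u := fwdDiff s u) (hshift.sub hun)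
    have hcomm : iteratedDeriv n (fwdDiff s u) ξ =
        iteratedDeriv n u (ξ + s) - iteratedDeriv n u ξ := by
      rw [show fwdDiff s u = (fun z => u (z + s)) - u from rfl,
        iteratedDeriv_sub hshift.contDiffAt hun.contDiffAt, iteratedDeriv_comp_add_const]
    obtain ⟨ζ, hζ⟩ := exists_add_sub_eq_mul_deriv
      (hu.differentiable_iteratedDeriv n (by exact_mod_cast n.lt_succ_self)) ξ s
    refine ⟨ζ, ?_⟩
    rw [Function.iterate_succ_apply, hξ, hcomm, hζ, iteratedDeriv_succ]
    ring

variable {M G : Type*} [AddCommMonoid M] [SeminormedAddCommGroup G]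

theorem norm_neg_one_pow_mul_choose_zsmul_le (n l k : ℕ) (v : G) :
    ‖((-1 : ℤ) ^ l * n.choose k) • v‖ ≤ 2 ^ n * ‖v‖ := by
  refine (norm_zsmul_le _ _).trans ?_
  gcongr
  simp only [norm_mul, norm_pow, norm_neg, norm_one, one_pow, one_mul, Int.norm_natCast]
  exact_mod_cast Nat.choose_le_two_pow n k

theorem norm_fwdDiff_iter_le (u : M → G) (n : ℕ) (x s : M) :
    ‖(fwdDiff s)^[n] u x‖ ≤ 2 ^ n * ∑ j ∈ Finset.range (n + 1), ‖u (x + j • s)‖ := by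
  rw [fwdDiff_iter_eq_sum_shift, Finset.mul_sum]
  exact norm_sum_le_of_le _ fun j _ => norm_neg_one_pow_mul_choose_zsmul_le n _ j _

theorem norm_le_norm_fwdDiff_iter_add (u : M → G) (n : ℕ) (x s : M) :
    ‖u x‖ ≤ ‖(fwdDiff s)^[n] u x‖ + 2 ^ n * ∑ j ∈ Finset.range n, ‖u (x + (j + 1) • s)‖ := by
  have hhead : ‖((-1 : ℤ) ^ (n - 0) * n.choose 0) • u (x + 0 • s)‖ = ‖u x‖ := by
    rcases neg_one_pow_eq_or ℤ n with h | h <;> simp [h]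
  have htail := norm_sum_le_of_le (Finset.range n) fun j _ =>
    norm_neg_one_pow_mul_choose_zsmul_le n (n - (j + 1)) (j + 1) (u (x + (j + 1) • s))
  rw [← Finset.mul_sum] at htail
  rw [← hhead, fwdDiff_iter_eq_sum_shift, Finset.sum_range_succ']
  exact (norm_le_add_norm_add' _ _).trans (by gcongr)

end ForwardDifferences

section Spread

/-- The property that each value of `u` is controlled, with constant `C`, by its next `m` values
along any arithmetic progression starting there. This is what is used of functions whose `n`-th
derivative has comparable values. The step `s` may be negative, which makes the property invariant
under reflection. -/
def Spread (C : ℝ) (m : ℕ) (u : ℝ → ℝ) : Prop :=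
  ∀ x s : ℝ, |u x| ≤ C * ∑ j ∈ Finset.range m, |u (x + (j + 1) • s)|

variable {C : ℝ} {m : ℕ} {u : ℝ → ℝ}

theorem spread_of_abs_iteratedDeriv_le {n : ℕ} {A : ℝ} (hA : 0 ≤ A) (hu : ContDiff ℝ n u)
    (hpinch : ∀ x y, |iteratedDeriv n u x| ≤ A * |iteratedDeriv n u y|) :
    Spread ((1 + A) * 2 ^ n) (n + 1) u := by
  intro x s
  set S := ∑ j ∈ Finset.range (n + 1), |u (x + (j + 1) • s)| with hS
  have hcompare : |(fwdDiff s)^[n] u x| ≤ A * |(fwdDiff s)^[n] u (x + s)| := by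
    obtain ⟨ξ, hξ⟩ := exists_fwdDiff_iter_eq_pow_mul_iteratedDeriv hu x s
    obtain ⟨ζ, hζ⟩ := exists_fwdDiff_iter_eq_pow_mul_iteratedDeriv hu (x + s) s
    rw [hξ, hζ, abs_mul, abs_mul, mul_left_comm]
    exact mul_le_mul_of_nonneg_left (hpinch ξ ζ) (abs_nonneg _)
  have hshift : |(fwdDiff s)^[n] u (x + s)| ≤ 2 ^ n * S := by
    simpa only [hS, succ_nsmul', add_assoc, Real.norm_eq_abs] using
      norm_fwdDiff_iter_le u n (x + s) s
  have hsum : ∑ j ∈ Finset.range n, |u (x + (j + 1) • s)| ≤ S :=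
    Finset.sum_le_sum_of_subset_of_nonneg (Finset.range_mono n.le_succ) fun _ _ _ => abs_nonneg _
  calc |u x| ≤ |(fwdDiff s)^[n] u x| + 2 ^ n * ∑ j ∈ Finset.range n, |u (x + (j + 1) • s)| :=
        norm_le_norm_fwdDiff_iter_add u n x s
    _ ≤ A * (2 ^ n * S) + 2 ^ n * S := by
        gcongr
        exact hcompare.trans (by gcongr)
    _ = (1 + A) * 2 ^ n * S := by ring

namespace Spread

theorem comp_neg (h : Spread C m u) : Spread C m (fun x => u (-x)) := by
  intro x s
  simpa only [neg_add, smul_neg] using h (-x) (-s)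

theorem pos_of_ne_zero (h : Spread C m u) {x : ℝ} (hx : u x ≠ 0) : 0 < m := by
  refine Nat.pos_of_ne_zero fun hm => hx ?_
  simpa [hm] using h x 0

theorem min_one_abs_div (h : Spread C m u) (hC : 1 ≤ C) {Λ : ℝ} (hΛ : 0 < Λ) :
    Spread C m (fun x => min 1 (|u x| / Λ)) := by
  intro x s
  have hnonneg (t : ℝ) : 0 ≤ min 1 (|u t| / Λ) := by positivity
  simp only [abs_of_nonneg (hnonneg _)]
  by_cases hlarge : ∃ j ∈ Finset.range m, 1 ≤ |u (x + (j + 1) • s)| / Λ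
  · obtain ⟨j, hj, hj1⟩ := hlarge
    calc min 1 (|u x| / Λ) ≤ 1 := min_le_left _ _
      _ ≤ C * min 1 (|u (x + (j + 1) • s)| / Λ) := by rwa [min_eq_left hj1, mul_one]
      _ ≤ _ := by
        gcongr
        exact Finset.single_le_sum (f := fun j => min 1 (|u (x + (j + 1) • s)| / Λ))
          (fun _ _ => hnonneg _) hj
  · push Not at hlarge
    rw [Finset.sum_congr rfl fun j hj => min_eq_right (hlarge j hj).le, ← Finset.sum_div,
      ← mul_div_assoc]
    exact (min_le_right _ _).trans (by gcongr; exact h x s)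

end Spread

theorem integral_comp_add_mul_le {ψ : ℝ → ℝ} (hψ : Continuous ψ) (hψ0 : ∀ x, 0 ≤ ψ x)
    {ξ c v w p q : ℝ} (hc : 1 ≤ |c|) (hv : ξ + c * v ∈ Icc p q) (hw : ξ + c * w ∈ Icc p q) :
    ∫ s in v..w, ψ (ξ + c * s) ≤ ∫ t in p..q, ψ t := by
  have hpq : p ≤ q := hv.1.trans hv.2
  have hsub : |∫ t in (ξ + c * v)..(ξ + c * w), ψ t| ≤ |∫ t in p..q, ψ t| := by
    refine intervalIntegral.abs_integral_mono_interval ?_ (.of_forall hψ0)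
      (hψ.intervalIntegrable _ _)
    rw [uIoc_of_le hpq]
    exact Ioc_subset_Ioc (le_min hv.1 hw.1) (max_le hv.2 hw.2)
  rw [abs_of_nonneg (intervalIntegral.integral_nonneg hpq fun t _ => hψ0 t)] at hsub
  rw [intervalIntegral.integral_comp_add_mul _ (abs_pos.1 (one_pos.trans_le hc)), smul_eq_mul]
  calc _ ≤ |c|⁻¹ * |∫ t in (ξ + c * v)..(ξ + c * w), ψ t| := by
        rw [← abs_inv, ← abs_mul]
        exact le_abs_self _
    _ ≤ 1 * |∫ t in (ξ + c * v)..(ξ + c * w), ψ t| := by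
        gcongr
        exact inv_le_one_of_one_le₀ hc
    _ ≤ ∫ t in p..q, ψ t := by rwa [one_mul]

namespace Spread

/-- Integrate the defining inequality at `ξ` over the steps `σ s`, `s ∈ [v, w]`. -/
theorem mul_le_mul_integral (h : Spread C m u) (hC : 0 ≤ C) (hu : Continuous u)
    (hu0 : ∀ x, 0 ≤ u x) {ξ σ v w p q : ℝ} (hσ : |σ| = 1) (hvw : v ≤ w)
    (hmem : ∀ j < m, ∀ s ∈ Icc v w, ξ + (j + 1) * σ * s ∈ Icc p q) :
    (w - v) * u ξ ≤ C * (m * ∫ t in p..q, u t) := by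
  have hpoint (s : ℝ) : u ξ ≤ C * ∑ j ∈ Finset.range m, u (ξ + (j + 1) * σ * s) := by
    simpa only [abs_of_nonneg (hu0 _), nsmul_eq_mul, Nat.cast_succ, mul_assoc] using h ξ (σ * s)
  have hterm (j : ℕ) (hj : j ∈ Finset.range m) :
      ∫ s in v..w, u (ξ + (j + 1) * σ * s) ≤ ∫ t in p..q, u t := by
    have hjm := hmem j (Finset.mem_range.1 hj)
    refine integral_comp_add_mul_le hu hu0 ?_ (hjm v (left_mem_Icc.2 hvw))
      (hjm w (right_mem_Icc.2 hvw))
    rw [abs_mul, hσ, mul_one, abs_of_nonneg (by positivity)]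
    exact le_add_of_nonneg_left j.cast_nonneg
  calc (w - v) * u ξ = ∫ _ in v..w, u ξ := by rw [intervalIntegral.integral_const, smul_eq_mul]
    _ ≤ ∫ s in v..w, C * ∑ j ∈ Finset.range m, u (ξ + (j + 1) * σ * s) :=
        intervalIntegral.integral_mono_on hvw (by simp)
          ((by fun_prop : Continuous _).intervalIntegrable _ _) fun s _ => hpoint s
    _ = C * ∑ j ∈ Finset.range m, ∫ s in v..w, u (ξ + (j + 1) * σ * s) := by
        rw [intervalIntegral.integral_const_mul, intervalIntegral.integral_finsetSum
          fun j _ => (by fun_prop : Continuous _).intervalIntegrable _ _]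
    _ ≤ C * (m * ∫ t in p..q, u t) := by
        gcongr
        simpa using Finset.sum_le_card_nsmul _ _ _ hterm

/-- The steps have modulus in `[s, 2 s]` and point towards the farther end of `[y, y + 8 m s]`. That
the points reached keep the distance `s` from `y` matters in `le_mul_integral_oscWeight`. -/
theorem mul_le_mul_integral_add (h : Spread C m u) (hC : 0 ≤ C) (hu : Continuous u)
    (hu0 : ∀ x, 0 ≤ u x) {y s ξ : ℝ} (hs : 0 ≤ s) (hξ : ξ ∈ Icc y (y + 8 * m * s)) :
    s * u ξ ≤ C * (m * ∫ t in (y + s)..(y + 8 * m * s), u t) := by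
  obtain ⟨σ, hσ, hmem⟩ : ∃ σ : ℝ, |σ| = 1 ∧ ∀ j < m, ∀ t ∈ Icc s (2 * s),
      ξ + (j + 1) * σ * t ∈ Icc (y + s) (y + 8 * m * s) := by
    have hstep : ∀ j < m, ∀ t ∈ Icc s (2 * s),
        s ≤ (j + 1) * t ∧ (j + 1) * t ≤ 2 * (m * s) ∧ s ≤ m * s := by
      intro j hj t ht
      have hjm : (j + 1 : ℝ) ≤ m := by exact_mod_cast hj
      have hj0 : (0 : ℝ) ≤ j := j.cast_nonneg
      refine ⟨by nlinarith [ht.1, hj0], ?_, by nlinarith [hj0]⟩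
      calc (j + 1) * t ≤ m * (2 * s) := by
            gcongr
            exacts [hs.trans ht.1, ht.2]
        _ = 2 * (m * s) := by ring
    rcases le_total ξ (y + 4 * (m * s)) with hξ' | hξ'
    · refine ⟨1, abs_one, fun j hj t ht => ?_⟩
      obtain ⟨hlow, hupp, hsm⟩ := hstep j hj t ht
      constructor <;> linarith [hξ.1, hsm]
    · refine ⟨-1, by simp, fun j hj t ht => ?_⟩
      obtain ⟨hlow, hupp, hsm⟩ := hstep j hj t ht
      constructor <;> linarith [hξ.2, hsm]
  simpa only [two_mul, add_sub_cancel_right] using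
    h.mul_le_mul_integral hC hu hu0 hσ (by linarith) hmem

end Spread

end Spread

section Weight

/-- The weight `min (1, |f''| / (f')²)` of a phase `f` with derivatives `g = f'` and `h = f''`. The
quotient counts as `+∞` at the zeros of `g`, where real division gives `0`. -/
noncomputable def oscWeight (g h : ℝ → ℝ) (x : ℝ) : ℝ :=
  if g x = 0 then 1 else min 1 (|h x| / g x ^ 2)

variable {g h : ℝ → ℝ} {a b : ℝ}

theorem oscWeight_nonneg (g h : ℝ → ℝ) (x : ℝ) : 0 ≤ oscWeight g h x := by
  unfold oscWeight
  split_ifs <;> positivity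

theorem oscWeight_le_one (g h : ℝ → ℝ) (x : ℝ) : oscWeight g h x ≤ 1 := by
  unfold oscWeight
  split_ifs <;> simp

theorem min_one_abs_div_le_oscWeight {x Λ : ℝ} (hΛ : g x ^ 2 ≤ Λ) :
    min 1 (|h x| / Λ) ≤ oscWeight g h x := by
  unfold oscWeight
  split_ifs with hgx
  · exact min_le_left _ _
  · have : 0 < g x ^ 2 := by positivity
    gcongr

theorem oscWeight_eq_div {x : ℝ} (hgx : g x ≠ 0) (hx : |h x| ≤ g x ^ 2) :
    oscWeight g h x = |h x| / g x ^ 2 := by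
  rw [oscWeight, if_neg hgx, min_eq_right (div_le_one_of_le₀ hx (sq_nonneg _))]

theorem intervalIntegrable_oscWeight (hg : Measurable g) (hh : Measurable h) (a b : ℝ) :
    IntervalIntegrable (oscWeight g h) volume a b := by
  have hmeas : Measurable (oscWeight g h) :=
    Measurable.ite (measurableSet_eq_fun hg measurable_const) measurable_const
      (measurable_const.min (hh.abs.div (hg.pow_const 2)))
  refine (intervalIntegrable_const (c := (1 : ℝ))).mono_fun hmeas.aestronglyMeasurable
    (.of_forall fun x => ?_)
  simpa only [norm_one, Real.norm_of_nonneg (oscWeight_nonneg g h x)] using oscWeight_le_one g h x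

theorem integral_oscWeight_nonneg (g h : ℝ → ℝ) (hab : a ≤ b) : 0 ≤ ∫ t in a..b, oscWeight g h t :=
  intervalIntegral.integral_nonneg hab fun t _ => oscWeight_nonneg g h t

theorem integral_oscWeight_mono (hg : Measurable g) (hh : Measurable h) {c d : ℝ} (hac : a ≤ c)
    (hcd : c ≤ d) (hdb : d ≤ b) :
    ∫ t in c..d, oscWeight g h t ≤ ∫ t in a..b, oscWeight g h t :=
  intervalIntegral.integral_mono_interval hac hcd hdb (.of_forall (oscWeight_nonneg g h))
    (intervalIntegrable_oscWeight hg hh a b)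

end Weight

theorem continuous_of_hasDerivAt {E : Type*} [NormedAddCommGroup E] [NormedSpace ℝ E]
    {u u' : ℝ → E} (hu : ∀ x, HasDerivAt u (u' x) x) : Continuous u :=
  continuous_iff_continuousAt.2 fun x => (hu x).continuousAt

theorem continuous_exp_I_mul {f : ℝ → ℝ} (hf : Continuous f) :
    Continuous fun t => Complex.exp (Complex.I * f t) := by
  fun_prop

theorem norm_integral_exp_I_mul_le_sub (f : ℝ → ℝ) {a b : ℝ} (hab : a ≤ b) :
    ‖∫ t in a..b, Complex.exp (Complex.I * f t)‖ ≤ b - a := by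
  simpa [abs_of_nonneg (sub_nonneg.2 hab)] using
    intervalIntegral.norm_integral_le_of_norm_le_const (a := a) (b := b)
      fun t _ => (Complex.norm_exp_I_mul_ofReal (f t)).le

section IntegrationByParts

variable {f g h : ℝ → ℝ} {x y : ℝ}

theorem continuousOn_div_sq (hg : Continuous g) (hh : Continuous h)
    (hne : ∀ t ∈ uIcc x y, g t ≠ 0) : ContinuousOn (fun t => h t / g t ^ 2) (uIcc x y) :=
  hh.continuousOn.div (hg.pow 2).continuousOn fun t ht => pow_ne_zero 2 (hne t ht)

theorem one_div_abs_le_add_integral (hg : ∀ x, HasDerivAt g (h x) x) (hh : Continuous h)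
    (hxy : x ≤ y) (hne : ∀ t ∈ Icc x y, g t ≠ 0) :
    1 / |g y| ≤ 1 / |g x| + ∫ t in x..y, |h t| / g t ^ 2 := by
  rw [← uIcc_of_le hxy] at hne
  have hftc : ∫ t in x..y, -h t / g t ^ 2 = (g y)⁻¹ - (g x)⁻¹ :=
    intervalIntegral.integral_eq_sub_of_hasDerivAt (fun t ht => (hg t).inv (hne t ht))
      (continuousOn_div_sq (continuous_of_hasDerivAt hg) hh.neg hne).intervalIntegrable
  have hnorm := intervalIntegral.abs_integral_le_integral_abs (f := fun t => -h t / g t ^ 2)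
    (μ := volume) hxy
  simp only [hftc, abs_div, abs_neg, abs_pow, sq_abs] at hnorm
  rw [one_div, one_div, ← abs_inv, ← abs_inv]
  linarith [abs_sub_abs_le_abs_sub (g y)⁻¹ (g x)⁻¹]

theorem norm_integral_exp_I_mul_le_add_integral (hf : ∀ x, HasDerivAt f (g x) x)
    (hg : ∀ x, HasDerivAt g (h x) x) (hh : Continuous h) (hxy : x ≤ y)
    (hne : ∀ t ∈ Icc x y, g t ≠ 0) :
    ‖∫ t in x..y, Complex.exp (Complex.I * f t)‖ ≤
      1 / |g y| + 1 / |g x| + ∫ t in x..y, |h t| / g t ^ 2 := by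
  rw [← uIcc_of_le hxy] at hne
  have hgc := continuous_of_hasDerivAt hg
  have hneI (t) (ht : t ∈ uIcc x y) : Complex.I * g t ≠ 0 :=
    mul_ne_zero Complex.I_ne_zero (Complex.ofReal_ne_zero.2 (hne t ht))
  set e : ℝ → ℂ := fun t => Complex.exp (Complex.I * f t)
  set p : ℝ → ℂ := fun t => -(Complex.I * h t) / (Complex.I * g t) ^ 2
  have hec : Continuous e := continuous_exp_I_mul (continuous_of_hasDerivAt hf)
  have he (t) : ‖e t‖ = 1 := Complex.norm_exp_I_mul_ofReal _
  have hpc : ContinuousOn p (uIcc x y) :=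
    ContinuousOn.div (by fun_prop) (by fun_prop) fun t ht => pow_ne_zero 2 (hneI t ht)
  -- `e = (I g)⁻¹ · e'`
  have hparts := intervalIntegral.integral_mul_deriv_eq_deriv_mul (a := x) (b := y)
    (u := fun t => (Complex.I * g t)⁻¹) (u' := p) (v := e) (v' := fun t => e t * (Complex.I * g t))
    (fun t ht => ((hg t).ofReal_comp.const_mul Complex.I).fun_inv (hneI t ht))
    (fun t _ => ((hf t).ofReal_comp.const_mul Complex.I).cexp)
    hpc.intervalIntegrable ((by fun_prop : Continuous _).intervalIntegrable _ _)
  have hint : ∫ t in x..y, e t = ∫ t in x..y, (Complex.I * g t)⁻¹ * (e t * (Complex.I * g t)) :=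
    intervalIntegral.integral_congr fun t ht => by
      rw [mul_comm (e t), inv_mul_cancel_left₀ (hneI t ht)]
  have hrest : ‖∫ t in x..y, p t * e t‖ ≤ ∫ t in x..y, |h t| / g t ^ 2 := by
    refine (intervalIntegral.norm_integral_le_integral_norm hxy).trans_eq ?_
    simp [p, he]
  have hbdry (t) : ‖(Complex.I * g t)⁻¹ * e t‖ = 1 / |g t| := by simp [he]
  rw [hint, hparts, ← hbdry, ← hbdry]
  exact (norm_sub_le _ _).trans (add_le_add (norm_sub_le _ _) hrest)

end IntegrationByParts

section SlowVariation

variable {f g h : ℝ → ℝ} {x y : ℝ}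

/-- By Grönwall's inequality, as `|g'| ≤ g² ≤ M |g|`. -/
theorem ne_zero_of_abs_deriv_le_sq (hg : ∀ x, HasDerivAt g (h x) x) (hgx : g x ≠ 0)
    (hslow : ∀ t ∈ Icc x y, |h t| ≤ g t ^ 2) {z : ℝ} (hz : z ∈ Icc x y) : g z ≠ 0 := by
  intro hgz
  have hgc := continuous_of_hasDerivAt hg
  obtain ⟨M, hM⟩ := isCompact_Icc.exists_bound_of_continuousOn (hgc.continuousOn (s := Icc x y))
  have hder (t : ℝ) : HasDerivAt (fun t => g (-t)) (-h (-t)) t := by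
    simpa [Function.comp_def] using (hg (-t)).scomp t (hasDerivAt_neg t)
  have hbound : ∀ t ∈ Ico (-z) (-x), ‖-h (-t)‖ ≤ M * ‖g (-t)‖ := by
    intro t ht
    have htmem : -t ∈ Icc x y := ⟨by linarith [ht.2], by linarith [ht.1, hz.2]⟩
    calc ‖-h (-t)‖ ≤ ‖g (-t)‖ * ‖g (-t)‖ := by
          rw [norm_neg, ← norm_mul, ← sq, Real.norm_of_nonneg (sq_nonneg (g (-t)))]
          exact hslow _ htmem
      _ ≤ M * ‖g (-t)‖ := by
          gcongr
          exact hM _ htmem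
  refine hgx ?_
  simpa using eq_zero_of_abs_deriv_le_mul_abs_self_of_eq_zero_right
    (continuous_of_hasDerivAt hder).continuousOn (fun t _ => (hder t).hasDerivWithinAt)
    (by simpa using hgz) hbound (-x) ⟨neg_le_neg hz.1, le_rfl⟩

theorem integral_abs_div_sq_eq_integral_oscWeight (hxy : x ≤ y) (hne : ∀ t ∈ Icc x y, g t ≠ 0)
    (hslow : ∀ t ∈ Icc x y, |h t| ≤ g t ^ 2) :
    ∫ t in x..y, |h t| / g t ^ 2 = ∫ t in x..y, oscWeight g h t := by
  refine intervalIntegral.integral_congr fun t ht => ?_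
  rw [uIcc_of_le hxy] at ht
  exact (oscWeight_eq_div (hne t ht) (hslow t ht)).symm

theorem one_div_abs_le_add_integral_oscWeight (hg : ∀ x, HasDerivAt g (h x) x) (hh : Continuous h)
    (hxy : x ≤ y) (hgx : g x ≠ 0) (hslow : ∀ t ∈ Icc x y, |h t| ≤ g t ^ 2) :
    1 / |g y| ≤ 1 / |g x| + ∫ t in x..y, oscWeight g h t := by
  have hne (t) (ht : t ∈ Icc x y) : g t ≠ 0 := ne_zero_of_abs_deriv_le_sq hg hgx hslow ht
  rw [← integral_abs_div_sq_eq_integral_oscWeight hxy hne hslow]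
  exact one_div_abs_le_add_integral hg hh hxy hne

theorem norm_integral_exp_I_mul_le_of_abs_deriv_le_sq (hf : ∀ x, HasDerivAt f (g x) x)
    (hg : ∀ x, HasDerivAt g (h x) x) (hh : Continuous h) (hxy : x ≤ y) (hgx : g x ≠ 0)
    (hslow : ∀ t ∈ Icc x y, |h t| ≤ g t ^ 2) :
    ‖∫ t in x..y, Complex.exp (Complex.I * f t)‖ ≤
      2 * (1 / |g x|) + 2 * ∫ t in x..y, oscWeight g h t := by
  have hne (t) (ht : t ∈ Icc x y) : g t ≠ 0 := ne_zero_of_abs_deriv_le_sq hg hgx hslow ht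
  have hparts := norm_integral_exp_I_mul_le_add_integral hf hg hh hxy hne
  rw [integral_abs_div_sq_eq_integral_oscWeight hxy hne hslow] at hparts
  linarith [one_div_abs_le_add_integral_oscWeight hg hh hxy hgx hslow]

end SlowVariation

section StationaryStep

theorem exists_first_le {α β : Type*} [ConditionallyCompleteLinearOrder α] [TopologicalSpace α]
    [OrderTopology α] [LinearOrder β] [TopologicalSpace β] [OrderClosedTopology β] {u v : α → β}
    {a b : α} (hu : ContinuousOn u (Icc a b)) (hv : ContinuousOn v (Icc a b)) :
    (∀ t ∈ Icc a b, u t < v t) ∨ ∃ y ∈ Icc a b, v y ≤ u y ∧ ∀ t ∈ Ico a y, u t < v t := by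
  rcases {t ∈ Icc a b | v t ≤ u t}.eq_empty_or_nonempty with hempty | hne
  · exact .inl fun t ht => not_le.1 fun htle => hempty.le ⟨ht, htle⟩
  · have hcompact : IsCompact {t ∈ Icc a b | v t ≤ u t} :=
      isCompact_Icc.of_isClosed_subset (isClosed_Icc.isClosed_le hv hu) (sep_subset _ _)
    obtain ⟨y, ⟨hy, hyle⟩, hleast⟩ := hcompact.exists_isLeast hne
    exact .inr ⟨y, hy, hyle, fun t ht => not_le.1 fun htle =>
      ht.2.not_ge (hleast ⟨⟨ht.1, ht.2.le.trans hy.2⟩, htle⟩)⟩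

variable {g h : ℝ → ℝ} {C : ℝ} {m : ℕ} {y z b : ℝ}

theorem integral_min_one_abs_div_le_integral_oscWeight (hg : Continuous g) (hh : Continuous h)
    {s : ℝ} (hs : 0 < s) (hsz : y + s ≤ z) (hsmall : ∀ t ∈ Ioo y z, (t - y) * |g t| < 1) :
    ∫ t in (y + s)..z, min 1 (|h t| / (1 / s) ^ 2) ≤ ∫ t in y..z, oscWeight g h t := by
  calc _ ≤ ∫ t in (y + s)..z, oscWeight g h t := by
        refine intervalIntegral.integral_mono_on_of_le_Ioo hsz
          ((by fun_prop : Continuous _).intervalIntegrable _ _)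
          (intervalIntegrable_oscWeight hg.measurable hh.measurable _ _) fun t ht => ?_
        have hgt : |g t| ≤ 1 / s := by
          rw [le_div_iff₀' hs]
          refine le_trans ?_ (hsmall t ⟨by linarith [ht.1], ht.2⟩).le
          gcongr
          linarith [ht.1]
        exact min_one_abs_div_le_oscWeight (sq_le_sq.2 (hgt.trans (le_abs_self _)))
    _ ≤ _ := integral_oscWeight_mono hg.measurable hh.measurable (by linarith) hsz le_rfl

/-- Past `y + s`, where `s = (z - y) / (8 m)`, the weight dominates `min (1, |h| / Λ)` with
`Λ = s⁻²`, to which the spread inequality applies. -/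
theorem le_mul_integral_oscWeight (hg : Continuous g) (hh : Continuous h) (hC : 1 ≤ C)
    (hS : Spread C m h) (hyz : y < z) (hsmall : ∀ t ∈ Ioo y z, (t - y) * |g t| < 1) {ξ : ℝ}
    (hξ : ξ ∈ Icc y z) (hlarge : 1 ≤ 4 * (z - y) ^ 2 * |h ξ|) :
    z - y ≤ 2048 * m ^ 4 * C * ∫ t in y..z, oscWeight g h t := by
  have hm : 0 < m := hS.pos_of_ne_zero (x := ξ) fun h0 => by norm_num [h0] at hlarge
  have hm1 : (1 : ℝ) ≤ m := by exact_mod_cast hm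
  obtain ⟨s, hs⟩ : ∃ s, z - y = 8 * m * s := ⟨(z - y) / (8 * m), by field_simp⟩
  have hs0 : 0 < s := pos_of_mul_pos_right (hs ▸ sub_pos.2 hyz) (by positivity)
  have hz : y + 8 * m * s = z := by rw [← hs, add_sub_cancel]
  rw [hs] at hlarge ⊢
  have hspread := (hS.min_one_abs_div hC (Λ := (1 / s) ^ 2) (by positivity)).mul_le_mul_integral_add
    (zero_le_one.trans hC) (by fun_prop) (fun t => by positivity) (y := y) hs0.le (by rwa [hz])
  rw [hz] at hspread
  have hlow : (1 : ℝ) ≤ 256 * m ^ 2 * min 1 (|h ξ| / (1 / s) ^ 2) := by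
    rw [mul_min_of_nonneg _ _ (by positivity), le_min_iff]
    refine ⟨by nlinarith, hlarge.trans_eq ?_⟩
    field_simp
    ring
  have hweight := integral_min_one_abs_div_le_integral_oscWeight hg hh hs0 (by nlinarith) hsmall
  calc 8 * m * s ≤ 8 * m * s * (256 * m ^ 2 * min 1 (|h ξ| / (1 / s) ^ 2)) :=
        le_mul_of_one_le_right (by positivity) hlow
    _ = 2048 * m ^ 3 * (s * min 1 (|h ξ| / (1 / s) ^ 2)) := by ring
    _ ≤ 2048 * m ^ 3 * (C * (m * ∫ t in y..z, oscWeight g h t)) :=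
        mul_le_mul_of_nonneg_left (hspread.trans (by gcongr)) (by positivity)
    _ = 2048 * m ^ 4 * C * ∫ t in y..z, oscWeight g h t := by ring

theorem two_mul_mul_abs_lt_one {r p q : ℝ} (hpq : p ^ 2 ≤ q) (hr : 4 * r ^ 2 * q < 1) :
    2 * r * |p| < 1 := by
  refine lt_of_pow_lt_pow_left₀ 2 zero_le_one ?_
  rw [mul_pow, sq_abs]
  nlinarith [sq_nonneg r]

theorem exists_one_le_mul_abs_deriv (hg : ∀ x, HasDerivAt g (h x) x) (hyz : y < z)
    (hy : g y ^ 2 ≤ |h y|) (hz : 1 ≤ (z - y) * |g z|) :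
    ∃ ξ ∈ Icc y z, 1 ≤ 4 * (z - y) ^ 2 * |h ξ| := by
  by_cases hlarge : 1 ≤ 4 * (z - y) ^ 2 * |h y|
  · exact ⟨y, left_mem_Icc.2 hyz.le, hlarge⟩
  · have hgy := two_mul_mul_abs_lt_one hy (not_le.1 hlarge)
    obtain ⟨ξ, hξ, hslope⟩ := exists_hasDerivAt_eq_slope g h hyz
      (continuous_of_hasDerivAt hg).continuousOn fun t _ => hg t
    refine ⟨ξ, Ioo_subset_Icc_self hξ, ?_⟩
    have hr : 0 < z - y := sub_pos.2 hyz
    calc (1 : ℝ) ≤ 4 * ((z - y) * (|g z| - |g y|)) := by linarith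
      _ ≤ 4 * ((z - y) * |g z - g y|) := by
          gcongr
          exact abs_sub_abs_le_abs_sub _ _
      _ = 4 * (z - y) ^ 2 * |h ξ| := by
          rw [hslope, abs_div, abs_of_pos hr]
          field_simp

theorem exists_stationary_step (hg : ∀ x, HasDerivAt g (h x) x) (hh : Continuous h) (hC : 1 ≤ C)
    (hS : Spread C m h) (hyb : y ≤ b) (hgy : g y ≠ 0) (hy : g y ^ 2 ≤ |h y|) :
    b - y ≤ 2048 * m ^ 4 * C * (∫ t in y..b, oscWeight g h t) + 1 / |g y| ∨
      ∃ z ∈ Icc y b, 1 ≤ (z - y) * |g z| ∧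
        z - y ≤ 2048 * m ^ 4 * C * ∫ t in y..z, oscWeight g h t := by
  have hgc := continuous_of_hasDerivAt hg
  rcases exists_first_le (a := y) (b := b) (u := fun t => (t - y) * |g t|) (v := fun _ => 1)
    (by fun_prop) (by fun_prop) with hsmall | ⟨z, hz, hz1, hsmall⟩
  · left
    have hW := integral_oscWeight_nonneg g h hyb
    rcases hyb.eq_or_lt with rfl | hlt
    · simp
    by_cases hlarge : 1 ≤ 4 * (b - y) ^ 2 * |h y|
    · exact (le_mul_integral_oscWeight hgc hh hC hS hlt
        (fun t ht => hsmall t (Ioo_subset_Icc_self ht)) (left_mem_Icc.2 hyb) hlarge).trans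
        (le_add_of_nonneg_right (by positivity))
    · refine le_add_of_nonneg_of_le (by positivity) ?_
      rw [le_div_iff₀ (abs_pos.2 hgy)]
      have := two_mul_mul_abs_lt_one hy (not_le.1 hlarge)
      nlinarith [mul_nonneg (sub_nonneg.2 hyb) (abs_nonneg (g y))]
  · right
    have hlt : y < z := hz.1.lt_of_ne fun hyz => by norm_num [hyz] at hz1
    obtain ⟨ξ, hξ, hlarge⟩ := exists_one_le_mul_abs_deriv hg hlt hy hz1
    exact ⟨z, hz, hz1, le_mul_integral_oscWeight hgc hh hC hS hlt
      (fun t ht => hsmall t (Ioo_subset_Ico_self ht)) hξ hlarge⟩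

end StationaryStep

section OneSided

variable {f g h : ℝ → ℝ} {C : ℝ} {m : ℕ} {x b : ℝ}

theorem exists_slow_run (hf : ∀ x, HasDerivAt f (g x) x) (hg : ∀ x, HasDerivAt g (h x) x)
    (hh : Continuous h) (hxb : x ≤ b) (hgx : g x ≠ 0) :
    ‖∫ t in x..b, Complex.exp (Complex.I * f t)‖ ≤
        2 * (1 / |g x|) + 2 * ∫ t in x..b, oscWeight g h t ∨
      ∃ y ∈ Icc x b, g y ≠ 0 ∧ g y ^ 2 ≤ |h y| ∧
        1 / |g y| ≤ 1 / |g x| + ∫ t in x..y, oscWeight g h t ∧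
        ‖∫ t in x..y, Complex.exp (Complex.I * f t)‖ ≤
          2 * (1 / |g x|) + 2 * ∫ t in x..y, oscWeight g h t := by
  have hgc := continuous_of_hasDerivAt hg
  rcases exists_first_le (a := x) (b := b) (u := fun t => |h t|) (v := fun t => g t ^ 2)
    (by fun_prop) (by fun_prop) with hslow | ⟨y, hy, hgh, hslow⟩
  · exact .inl (norm_integral_exp_I_mul_le_of_abs_deriv_le_sq hf hg hh hxb hgx
      fun t ht => (hslow t ht).le)
  refine .inr ⟨y, hy, ?_⟩
  rcases hy.1.eq_or_lt with rfl | hxy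
  · exact ⟨hgx, hgh, by simp, by simp⟩
  · have hslow' : ∀ t ∈ Icc x y, |h t| ≤ g t ^ 2 := by
      intro t ht
      rw [← closure_Ico hxy.ne] at ht
      exact le_on_closure (fun t ht => (hslow t ht).le) (by fun_prop) (by fun_prop) ht
    exact ⟨ne_zero_of_abs_deriv_le_sq hg hgx hslow' ⟨hy.1, le_rfl⟩, hgh,
      one_div_abs_le_add_integral_oscWeight hg hh hy.1 hgx hslow',
      norm_integral_exp_I_mul_le_of_abs_deriv_le_sq hf hg hh hy.1 hgx hslow'⟩

theorem norm_integral_exp_I_mul_le_norm_add_sub (hf : Continuous f) {y z : ℝ} (hyz : y ≤ z) :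
    ‖∫ t in x..z, Complex.exp (Complex.I * f t)‖ ≤
      ‖∫ t in x..y, Complex.exp (Complex.I * f t)‖ + (z - y) := by
  rw [← intervalIntegral.integral_add_adjacent_intervals
    ((continuous_exp_I_mul hf).intervalIntegrable x y)
    ((continuous_exp_I_mul hf).intervalIntegrable y z)]
  exact (norm_add_le _ _).trans (by gcongr; exact norm_integral_exp_I_mul_le_sub f hyz)

/-- One slow run followed by one stationary step, the length of which also pays for restarting. -/
theorem exists_step (hf : ∀ x, HasDerivAt f (g x) x) (hg : ∀ x, HasDerivAt g (h x) x)
    (hh : Continuous h) (hC : 1 ≤ C) (hS : Spread C m h) (hxb : x ≤ b) (hgx : g x ≠ 0) :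
    ‖∫ t in x..b, Complex.exp (Complex.I * f t)‖ ≤
        (8192 * m ^ 4 * C + 3) * (∫ t in x..b, oscWeight g h t) + 3 * (1 / |g x|) ∨
      ∃ z ∈ Icc x b, 1 ≤ (z - x) * |g z| ∧
        ‖∫ t in x..z, Complex.exp (Complex.I * f t)‖ + 3 * (1 / |g z|) ≤
          (8192 * m ^ 4 * C + 3) * (∫ t in x..z, oscWeight g h t) + 3 * (1 / |g x|) := by
  have hfc := continuous_of_hasDerivAt hf
  have hwi := intervalIntegrable_oscWeight (continuous_of_hasDerivAt hg).measurable hh.measurable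
  have hx0 : 0 ≤ 1 / |g x| := by positivity
  have hD : 0 ≤ m ^ 4 * C := by positivity
  rcases exists_slow_run hf hg hh hxb hgx with hrun | ⟨y, hy, hgy, hgh, hinv, hrun⟩
  · left
    nlinarith [mul_nonneg hD (integral_oscWeight_nonneg g h hxb), integral_oscWeight_nonneg g h hxb]
  have hW := integral_oscWeight_nonneg g h hy.1
  have hDW := mul_nonneg hD hW
  rcases exists_stationary_step hg hh hC hS hy.2 hgy hgh with hend | ⟨z, hz, hz1, hstep⟩
  · left
    have hlast := norm_integral_exp_I_mul_le_norm_add_sub (x := x) hfc hy.2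
    have hW' := integral_oscWeight_nonneg g h hy.2
    rw [← intervalIntegral.integral_add_adjacent_intervals (hwi x y) (hwi y b)]
    linarith [mul_nonneg hD hW']
  · right
    have hz0 : 0 < |g z| := abs_pos.2 fun h0 => by norm_num [h0] at hz1
    have hrestart : 1 / |g z| ≤ z - y := by rwa [div_le_iff₀ hz0]
    have hlast := norm_integral_exp_I_mul_le_norm_add_sub (x := x) hfc hz.1
    have hW' := integral_oscWeight_nonneg g h hz.1
    refine ⟨z, ⟨hy.1.trans hz.1, hz.2⟩, hz1.trans (by gcongr; exact hy.1), ?_⟩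
    rw [← intervalIntegral.integral_add_adjacent_intervals (hwi x y) (hwi y z)]
    linarith [mul_nonneg hD hW']

theorem norm_integral_exp_I_mul_le_of_sub_le (hf : ∀ x, HasDerivAt f (g x) x)
    (hg : ∀ x, HasDerivAt g (h x) x) (hh : Continuous h) (hC : 1 ≤ C) (hS : Spread C m h)
    {M : ℝ} {N : ℕ} (hN : (b - x) * M ≤ N) (hxb : x ≤ b) (hgx : g x ≠ 0)
    (hM : ∀ t ∈ Icc x b, |g t| ≤ M) :
    ‖∫ t in x..b, Complex.exp (Complex.I * f t)‖ ≤
      (8192 * m ^ 4 * C + 3) * (∫ t in x..b, oscWeight g h t) + 3 * (1 / |g x|) := by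
  induction N generalizing x with
  | zero =>
    have hM0 : 0 < M := (abs_pos.2 hgx).trans_le (hM x (left_mem_Icc.2 hxb))
    obtain rfl : x = b := hxb.antisymm
      (sub_nonpos.1 (nonpos_of_mul_nonpos_left (hN.trans_eq Nat.cast_zero) hM0))
    simp only [intervalIntegral.integral_same, norm_zero]
    positivity
  | succ N ih =>
    rcases exists_step hf hg hh hC hS hxb hgx with hend | ⟨z, hz, hz1, hstep⟩
    · exact hend
    have hlong : 1 ≤ (z - x) * M := hz1.trans (mul_le_mul_of_nonneg_left (hM z hz)
      (sub_nonneg.2 hz.1))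
    have hrest := ih (x := z) (by push_cast at hN; linarith) hz.2
      (fun h0 => by norm_num [h0] at hz1) fun t ht => hM t ⟨hz.1.trans ht.1, ht.2⟩
    have hei := (continuous_exp_I_mul (continuous_of_hasDerivAt hf)).intervalIntegrable
      (μ := volume)
    have hwi := intervalIntegrable_oscWeight (continuous_of_hasDerivAt hg).measurable hh.measurable
    rw [← intervalIntegral.integral_add_adjacent_intervals (hei x z) (hei z b),
      ← intervalIntegral.integral_add_adjacent_intervals (hwi x z) (hwi z b)]
    linarith [norm_add_le (∫ t in x..z, Complex.exp (Complex.I * f t))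
      (∫ t in z..b, Complex.exp (Complex.I * f t))]

theorem norm_integral_exp_I_mul_le (hf : ∀ x, HasDerivAt f (g x) x)
    (hg : ∀ x, HasDerivAt g (h x) x) (hh : Continuous h) (hC : 1 ≤ C) (hS : Spread C m h)
    (hxb : x ≤ b) (hgx : g x ≠ 0) :
    ‖∫ t in x..b, Complex.exp (Complex.I * f t)‖ ≤
      (8192 * m ^ 4 * C + 3) * (∫ t in x..b, oscWeight g h t) + 3 * (1 / |g x|) := by
  obtain ⟨M, hM⟩ := isCompact_Icc.exists_bound_of_continuousOn
    ((continuous_of_hasDerivAt hg).continuousOn (s := Icc x b))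
  obtain ⟨N, hN⟩ := exists_nat_ge ((b - x) * M)
  exact norm_integral_exp_I_mul_le_of_sub_le hf hg hh hC hS hN hxb hgx hM

theorem norm_integral_exp_I_mul_le_left (hf : ∀ x, HasDerivAt f (g x) x)
    (hg : ∀ x, HasDerivAt g (h x) x) (hh : Continuous h) (hC : 1 ≤ C) (hS : Spread C m h)
    (hxb : x ≤ b) (hgb : g b ≠ 0) :
    ‖∫ t in x..b, Complex.exp (Complex.I * f t)‖ ≤
      (8192 * m ^ 4 * C + 3) * (∫ t in x..b, oscWeight g h t) + 3 * (1 / |g b|) := by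
  have hf' (t : ℝ) : HasDerivAt (fun t => f (-t)) (-g (-t)) t := by
    simpa [Function.comp_def] using (hf (-t)).scomp t (hasDerivAt_neg t)
  have hg' (t : ℝ) : HasDerivAt (fun t => -g (-t)) (h (-t)) t := by
    simpa [Function.comp_def] using ((hg (-t)).scomp t (hasDerivAt_neg t)).fun_neg
  have hweight (t : ℝ) : oscWeight (fun t => -g (-t)) (fun t => h (-t)) t = oscWeight g h (-t) := by
    simp only [oscWeight, neg_eq_zero, neg_sq]
  simpa only [hweight, intervalIntegral.integral_comp_neg fun t => oscWeight g h t,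
    intervalIntegral.integral_comp_neg fun t => Complex.exp (Complex.I * f t), neg_neg, abs_neg]
    using norm_integral_exp_I_mul_le hf' hg' (by fun_prop) hC hS.comp_neg (neg_le_neg hxb)
      (by simpa using hgb)

theorem norm_integral_exp_I_mul_le_of_mem_Icc (hf : ∀ x, HasDerivAt f (g x) x)
    (hg : ∀ x, HasDerivAt g (h x) x) (hh : Continuous h) (hC : 1 ≤ C) (hS : Spread C m h)
    {a y c : ℝ} (hy : y ∈ Icc a b) (hc : c ∈ Icc a b) (hgy : g y ≠ 0) :
    ‖∫ t in y..c, Complex.exp (Complex.I * f t)‖ ≤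
      (8192 * m ^ 4 * C + 3) * (∫ t in a..b, oscWeight g h t) + 3 * (1 / |g y|) := by
  have hmono {p q : ℝ} (hp : a ≤ p) (hpq : p ≤ q) (hq : q ≤ b) :
      (8192 * m ^ 4 * C + 3) * (∫ t in p..q, oscWeight g h t) + 3 * (1 / |g y|) ≤
        (8192 * m ^ 4 * C + 3) * (∫ t in a..b, oscWeight g h t) + 3 * (1 / |g y|) := by
    gcongr
    exact integral_oscWeight_mono (continuous_of_hasDerivAt hg).measurable hh.measurable hp hpq hq
  rcases le_total y c with hyc | hcy
  · exact (norm_integral_exp_I_mul_le hf hg hh hC hS hyc hgy).trans (hmono hy.1 hyc hc.2)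
  · rw [intervalIntegral.integral_symm, norm_neg]
    exact (norm_integral_exp_I_mul_le_left hf hg hh hC hS hcy hgy).trans (hmono hc.1 hcy hy.2)

end OneSided

section Amplitude

theorem norm_le_sSup_norm_image {X F : Type*} [TopologicalSpace X] [SeminormedAddCommGroup F]
    {u : X → F} {s : Set X} (hs : IsCompact s) (hu : ContinuousOn u s) {x : X} (hx : x ∈ s) :
    ‖u x‖ ≤ sSup ((fun x => ‖u x‖) '' s) :=
  le_csSup (hs.bddAbove_image hu.norm) (mem_image_of_mem _ hx)

variable {𝕜 E : Type*} [NontriviallyNormedField 𝕜] [NormedAlgebra ℝ 𝕜] [CompleteSpace 𝕜]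
  [NormedAddCommGroup E] [NormedSpace 𝕜 E] [NormedSpace ℝ E] [IsScalarTower ℝ 𝕜 E]
  [CompleteSpace E] {e : ℝ → 𝕜} {φ φ' : ℝ → E} {a b y : ℝ}

theorem integral_smul_eq_sub_integral_primitive_smul (he : ContinuousOn e (Icc a b))
    (hy : y ∈ Icc a b) (hφ : ContinuousOn φ (Icc a b))
    (hφ' : ∀ t ∈ Ioo a b, HasDerivAt φ (φ' t) t) (hint : IntervalIntegrable φ' volume a b) :
    ∫ x in a..b, e x • φ x = (∫ t in y..b, e t) • φ b - (∫ t in y..a, e t) • φ a -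
      ∫ x in a..b, (∫ t in y..x, e t) • φ' x := by
  have hab : a ≤ b := hy.1.trans hy.2
  have hei : IntervalIntegrable e volume a b := (uIcc_of_le hab ▸ he).intervalIntegrable
  have hprim : ContinuousOn (fun x => ∫ t in y..x, e t) (uIcc a b) :=
    intervalIntegral.continuousOn_primitive_interval' hei (uIcc_of_le hab ▸ hy)
  have hprim' : ∀ t ∈ Ioo a b, HasDerivAt (fun x => ∫ t in y..x, e t) (e t) t := fun t ht =>
    intervalIntegral.integral_hasDerivAt_right
      (hei.mono_set (uIcc_subset_uIcc (uIcc_of_le hab ▸ hy)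
        (uIcc_of_le hab ▸ Ioo_subset_Icc_self ht)))
      ((he.mono Ioo_subset_Icc_self).stronglyMeasurableAtFilter isOpen_Ioo t ht)
      (he.continuousAt (Icc_mem_nhds ht.1 ht.2))
  rw [← uIcc_of_le hab] at hφ
  have hparts := intervalIntegral.integral_deriv_smul_eq_sub_of_hasDeriv_right hprim hφ
    (by simpa only [min_eq_left hab, max_eq_right hab] using
      fun t ht => (hprim' t ht).hasDerivWithinAt)
    (by simpa only [min_eq_left hab, max_eq_right hab] using
      fun t ht => (hφ' t ht).hasDerivWithinAt) hei hint
  rw [← hparts, intervalIntegral.integral_add (hei.smul_continuousOn hφ)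
    (hint.continuousOn_smul hprim), add_sub_cancel_right]

theorem norm_integral_smul_le_of_forall_norm_integral_le (he : ContinuousOn e (Icc a b))
    (hy : y ∈ Icc a b) (hφ : ContDiffOn ℝ 1 φ (Icc a b)) {Q : ℝ}
    (hQ : ∀ c ∈ Icc a b, ‖∫ t in y..c, e t‖ ≤ Q) :
    ‖∫ x in a..b, e x • φ x‖ ≤ (2 * sSup ((fun x => ‖φ x‖) '' Icc a b) +
      ∫ x in a..b, ‖derivWithin φ (Icc a b) x‖) * Q := by
  have hab : a ≤ b := hy.1.trans hy.2
  have hQ0 : 0 ≤ Q := (norm_nonneg _).trans (hQ y hy)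
  rcases hab.eq_or_lt with rfl | hlt
  · simpa using by positivity
  set P := sSup ((fun x => ‖φ x‖) '' Icc a b)
  have hsup {c : ℝ} (hc : c ∈ Icc a b) : ‖(∫ t in y..c, e t) • φ c‖ ≤ Q * P :=
    (norm_smul_le _ _).trans <|
      mul_le_mul (hQ c hc) (norm_le_sSup_norm_image isCompact_Icc hφ.continuousOn hc)
        (norm_nonneg _) hQ0
  have hder : ContinuousOn (derivWithin φ (Icc a b)) (uIcc a b) := by
    rw [uIcc_of_le hab]
    exact hφ.continuousOn_derivWithin (uniqueDiffOn_Icc hlt) le_rfl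
  have hrest : ‖∫ x in a..b, (∫ t in y..x, e t) • derivWithin φ (Icc a b) x‖ ≤
      ∫ x in a..b, Q * ‖derivWithin φ (Icc a b) x‖ := by
    refine intervalIntegral.norm_integral_le_of_norm_le hab (.of_forall fun x hx => ?_)
      (hder.norm.const_mul Q).intervalIntegrable
    exact (norm_smul_le _ _).trans
      (mul_le_mul_of_nonneg_right (hQ x (Ioc_subset_Icc_self hx)) (norm_nonneg _))
  rw [intervalIntegral.integral_const_mul] at hrest
  rw [integral_smul_eq_sub_integral_primitive_smul he hy hφ.continuousOn
    (fun t ht => (((hφ.differentiableOn one_ne_zero) t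
      (Ioo_subset_Icc_self ht)).hasDerivWithinAt.hasDerivAt (Icc_mem_nhds ht.1 ht.2)))
    hder.intervalIntegrable]
  calc _ ≤ Q * P + Q * P + Q * ∫ x in a..b, ‖derivWithin φ (Icc a b) x‖ :=
        (norm_sub_le _ _).trans (add_le_add ((norm_sub_le _ _).trans
          (add_le_add (hsup (right_mem_Icc.2 hab)) (hsup (left_mem_Icc.2 hab)))) hrest)
    _ = _ := by ring

end Amplitude

theorem norm_integral_exp_I_mul_smul_le {E : Type*} [NormedAddCommGroup E] [NormedSpace ℂ E]
    {f : ℝ → ℝ} {φ : ℝ → E} {a b : ℝ} (hab : a ≤ b) (hφ : ContinuousOn φ (Icc a b)) :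
    ‖∫ x in a..b, Complex.exp (Complex.I * f x) • φ x‖ ≤
      sSup ((fun x => ‖φ x‖) '' Icc a b) * (b - a) := by
  rw [← abs_of_nonneg (sub_nonneg.2 hab)]
  refine intervalIntegral.norm_integral_le_of_norm_le_const fun x hx => ?_
  rw [uIoc_of_le hab] at hx
  rw [norm_smul, Complex.norm_exp_I_mul_ofReal, one_mul]
  exact norm_le_sSup_norm_image isCompact_Icc hφ (Ioc_subset_Icc_self hx)

section Interval

variable {f : ℝ → ℝ} {a b A : ℝ} {n : ℕ}

theorem abs_le_mul_abs_of_sSup_le_mul_sInf {X : Type*} [TopologicalSpace X] {u : X → ℝ} {s : Set X}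
    (hs : IsCompact s) (hu : ContinuousOn u s) (hA : 0 ≤ A)
    (hsup : sSup ((fun x => |u x|) '' s) ≤ A * sInf ((fun x => |u x|) '' s)) {x y : X}
    (hx : x ∈ s) (hy : y ∈ s) : |u x| ≤ A * |u y| :=
  calc |u x| ≤ sSup ((fun x => |u x|) '' s) := norm_le_sSup_norm_image hs hu hx
    _ ≤ A * sInf ((fun x => |u x|) '' s) := hsup
    _ ≤ A * |u y| := by
      gcongr
      exact csInf_le (hs.bddBelow_image hu.abs) (mem_image_of_mem _ hy)

theorem norm_integral_exp_I_mul_le_of_contDiff {F : ℝ → ℝ} (hA : 0 ≤ A)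
    (hF : ContDiff ℝ (n + 2 : ℕ) F)
    (hpinch : ∀ x y, |iteratedDeriv (n + 2) F x| ≤ A * |iteratedDeriv (n + 2) F y|) {y c : ℝ}
    (hy : y ∈ Icc a b) (hc : c ∈ Icc a b) (hFy : iteratedDeriv 1 F y ≠ 0) :
    ‖∫ t in y..c, Complex.exp (Complex.I * F t)‖ ≤
      (8192 * (n + 1 : ℕ) ^ 4 * ((1 + A) * 2 ^ n) + 3) *
        (∫ t in a..b, oscWeight (iteratedDeriv 1 F) (iteratedDeriv 2 F) t) +
      3 * (1 / |iteratedDeriv 1 F y|) := by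
  have hder (i : ℕ) (hi : i < n + 2) (x : ℝ) :
      HasDerivAt (iteratedDeriv i F) (iteratedDeriv (i + 1) F x) x := by
    rw [iteratedDeriv_succ]
    exact (hF.differentiable_iteratedDeriv i (by exact_mod_cast hi) x).hasDerivAt
  have hsecond : ContDiff ℝ n (iteratedDeriv 2 F) := by
    rw [iteratedDeriv_eq_iterate]
    exact ContDiff.iterate_deriv' n 2 (by exact_mod_cast hF)
  have hspread : Spread ((1 + A) * 2 ^ n) (n + 1) (iteratedDeriv 2 F) :=
    spread_of_abs_iteratedDeriv_le hA hsecond (by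
      simpa only [iteratedDeriv_eq_iterate, ← Function.iterate_add_apply] using hpinch)
  exact norm_integral_exp_I_mul_le_of_mem_Icc (by simpa using hder 0 (by lia))
    (hder 1 (by lia)) hsecond.continuous
    (one_le_mul_of_one_le_of_one_le (by linarith) (one_le_pow₀ one_le_two)) hspread hy hc hFy

theorem norm_integral_exp_I_mul_le_of_contDiffOn (hab : a < b) (hA : 0 ≤ A)
    (hf : ContDiffOn ℝ (n + 2 : ℕ) f (Icc a b))
    (hpinch : ∀ x ∈ Icc a b, ∀ y ∈ Icc a b, |iteratedDerivWithin (n + 2) f (Icc a b) x| ≤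
      A * |iteratedDerivWithin (n + 2) f (Icc a b) y|) {y c : ℝ}
    (hy : y ∈ Icc a b) (hc : c ∈ Icc a b) (hfy : iteratedDerivWithin 1 f (Icc a b) y ≠ 0) :
    ‖∫ t in y..c, Complex.exp (Complex.I * f t)‖ ≤
      (8192 * (n + 1 : ℕ) ^ 4 * ((1 + A) * 2 ^ n) + 3) *
        (∫ t in a..b, oscWeight (iteratedDerivWithin 1 f (Icc a b))
          (iteratedDerivWithin 2 f (Icc a b)) t) +
      3 * (1 / |iteratedDerivWithin 1 f (Icc a b) y|) := by
  obtain ⟨F, hF, hFf, hFmem⟩ := exists_contDiff_extension hab (n + 2) hf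
  have hpinchF (x y : ℝ) : |iteratedDeriv (n + 2) F x| ≤ A * |iteratedDeriv (n + 2) F y| := by
    obtain ⟨x', hx', hx⟩ := hFmem x
    obtain ⟨y', hy', hy⟩ := hFmem y
    rw [← hx, ← hy]
    exact hpinch x' hx' y' hy'
  have hder {i : ℕ} (hi : i ≤ n + 2) {t : ℝ} (ht : t ∈ Icc a b) :
      iteratedDerivWithin i f (Icc a b) t = iteratedDeriv i F t := by
    rw [← iteratedDerivWithin_congr hFf ht]
    exact iteratedDerivWithin_eq_iteratedDeriv (uniqueDiffOn_Icc hab)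
      (hF.of_le (by exact_mod_cast hi)).contDiffAt ht
  have hexp : ∫ t in y..c, Complex.exp (Complex.I * f t) =
      ∫ t in y..c, Complex.exp (Complex.I * F t) :=
    intervalIntegral.integral_congr fun t ht => by
      simp only [hFf (ordConnected_Icc.uIcc_subset hy hc ht)]
  have hweight : ∫ t in a..b, oscWeight (iteratedDerivWithin 1 f (Icc a b))
      (iteratedDerivWithin 2 f (Icc a b)) t =
      ∫ t in a..b, oscWeight (iteratedDeriv 1 F) (iteratedDeriv 2 F) t :=
    intervalIntegral.integral_congr fun t ht => by
      rw [uIcc_of_le hab.le] at ht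
      simp only [oscWeight, hder (show 1 ≤ n + 2 by lia) ht, hder (show 2 ≤ n + 2 by lia) ht]
  rw [hder (by lia) hy] at hfy ⊢
  rw [hexp, hweight]
  exact norm_integral_exp_I_mul_le_of_contDiff hA hF hpinchF hy hc hfy

theorem norm_integral_exp_I_mul_smul_le_of_contDiffOn {E : Type*} [NormedAddCommGroup E]
    [NormedSpace ℂ E] [CompleteSpace E] {φ : ℝ → E} (hab : a < b) (hA : 0 ≤ A)
    (hf : ContDiffOn ℝ (n + 2 : ℕ) f (Icc a b))
    (hpinch : ∀ x ∈ Icc a b, ∀ y ∈ Icc a b, |iteratedDerivWithin (n + 2) f (Icc a b) x| ≤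
      A * |iteratedDerivWithin (n + 2) f (Icc a b) y|)
    (hφ : ContDiffOn ℝ 1 φ (Icc a b))
    (hzero : sSup ((fun x => |iteratedDerivWithin 1 f (Icc a b) x|) '' Icc a b) ≠ 0) :
    ‖∫ x in a..b, Complex.exp (Complex.I * f x) • φ x‖ ≤
      2 * (8192 * (n + 1 : ℕ) ^ 4 * ((1 + A) * 2 ^ n) + 3) *
        (sSup ((fun x => ‖φ x‖) '' Icc a b) + ∫ x in a..b, ‖derivWithin φ (Icc a b) x‖) *
        ((∫ x in a..b, oscWeight (iteratedDerivWithin 1 f (Icc a b))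
            (iteratedDerivWithin 2 f (Icc a b)) x) +
          1 / sSup ((fun x => |iteratedDerivWithin 1 f (Icc a b) x|) '' Icc a b)) := by
  have hg : ContinuousOn (iteratedDerivWithin 1 f (Icc a b)) (Icc a b) :=
    hf.continuousOn_iteratedDerivWithin (by exact_mod_cast Nat.le_add_left 1 (n + 1))
      (uniqueDiffOn_Icc hab)
  obtain ⟨y, hy, hmax⟩ :=
    isCompact_Icc.exists_sSup_image_eq (nonempty_Icc.2 hab.le) hg.abs
  rw [hmax] at hzero ⊢
  have hexp : ContinuousOn (fun x => Complex.exp (Complex.I * f x)) (Icc a b) :=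
    Complex.continuous_exp.comp_continuousOn
      (continuousOn_const.mul (Complex.continuous_ofReal.comp_continuousOn hf.continuousOn))
  have hmain := norm_integral_smul_le_of_forall_norm_integral_le hexp hy hφ fun c hc =>
    norm_integral_exp_I_mul_le_of_contDiffOn hab hA hf hpinch hy hc (abs_ne_zero.1 hzero)
  set K : ℝ := 8192 * (n + 1 : ℕ) ^ 4 * ((1 + A) * 2 ^ n) + 3
  set P := sSup ((fun x => ‖φ x‖) '' Icc a b)
  set J := ∫ x in a..b, ‖derivWithin φ (Icc a b) x‖
  set W := ∫ x in a..b, oscWeight (iteratedDerivWithin 1 f (Icc a b))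
    (iteratedDerivWithin 2 f (Icc a b)) x
  set T := 1 / |iteratedDerivWithin 1 f (Icc a b) y|
  have hK3 : 3 ≤ K := le_add_of_nonneg_left (by positivity)
  have hP : 0 ≤ P := Real.sSup_nonneg (forall_mem_image.2 fun _ _ => norm_nonneg _)
  have hJ : 0 ≤ J := intervalIntegral.integral_nonneg hab.le fun _ _ => norm_nonneg _
  have hW : 0 ≤ W := integral_oscWeight_nonneg _ _ hab.le
  calc _ ≤ (2 * P + J) * (K * W + 3 * T) := hmain
    _ ≤ (2 * P + 2 * J) * (K * W + K * T) := by
        gcongr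
        linarith
    _ = 2 * K * (P + J) * (W + T) := by ring

end Interval

theorem stmt0_general (k : ℕ) (hk : 2 ≤ k) (A : ℝ) (hA : 0 ≤ A) :
    ∃ B : ℝ, 0 < B ∧
      ∀ (a b : ℝ), a ≤ b →
      ∀ f : ℝ → ℝ, ContDiffOn ℝ k f (Icc a b) →
      sSup ((fun x => |iteratedDerivWithin k f (Icc a b) x|) '' Icc a b) ≤
        A * sInf ((fun x => |iteratedDerivWithin k f (Icc a b) x|) '' Icc a b) →
      ∀ (E : Type*) [NormedAddCommGroup E] [NormedSpace ℂ E] [CompleteSpace E],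
      ∀ φ : ℝ → E, ContDiffOn ℝ 1 φ (Icc a b) →
      ‖∫ x in a..b, Complex.exp (Complex.I * (f x : ℂ)) • φ x‖ ≤
        B * (sSup ((fun x => ‖φ x‖) '' Icc a b) + ∫ x in a..b, ‖derivWithin φ (Icc a b) x‖) *
        ((∫ x in a..b, oscWeight (iteratedDerivWithin 1 f (Icc a b))
            (iteratedDerivWithin 2 f (Icc a b)) x) +
          (if sSup ((fun x => |iteratedDerivWithin 1 f (Icc a b) x|) '' Icc a b) = 0 then b - a
           else min (b - a)
             (1 / sSup ((fun x => |iteratedDerivWithin 1 f (Icc a b) x|) '' Icc a b)))) := by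
  obtain ⟨n, rfl⟩ := Nat.exists_eq_add_of_le' hk
  have hD : 0 ≤ 8192 * ((n + 1 : ℕ) : ℝ) ^ 4 * ((1 + A) * 2 ^ n) := by positivity
  refine ⟨2 * (8192 * (n + 1 : ℕ) ^ 4 * ((1 + A) * 2 ^ n) + 3), by positivity,
    fun a b hab f hf hsup E _ _ _ φ hφ => ?_⟩
  have hP : 0 ≤ sSup ((fun x => ‖φ x‖) '' Icc a b) :=
    Real.sSup_nonneg (forall_mem_image.2 fun _ _ => norm_nonneg _)
  have hJ : 0 ≤ ∫ x in a..b, ‖derivWithin φ (Icc a b) x‖ :=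
    intervalIntegral.integral_nonneg hab fun _ _ => norm_nonneg _
  have hW := integral_oscWeight_nonneg (iteratedDerivWithin 1 f (Icc a b))
    (iteratedDerivWithin 2 f (Icc a b)) hab
  have hPJ : sSup ((fun x => ‖φ x‖) '' Icc a b) ≤
      2 * (8192 * (n + 1 : ℕ) ^ 4 * ((1 + A) * 2 ^ n) + 3) *
        (sSup ((fun x => ‖φ x‖) '' Icc a b) + ∫ x in a..b, ‖derivWithin φ (Icc a b) x‖) := by
    nlinarith
  have htrivial := (norm_integral_exp_I_mul_smul_le (f := f) hab hφ.continuousOn).trans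
    (mul_le_mul hPJ (le_add_of_nonneg_left hW) (sub_nonneg.2 hab) (by positivity))
  split_ifs with hzero
  · exact htrivial
  rcases hab.eq_or_lt with rfl | hlt
  · simp
  rw [← min_add_add_left, mul_min_of_nonneg _ _ (by positivity)]
  exact le_min htrivial <| norm_integral_exp_I_mul_smul_le_of_contDiffOn hlt hA hf
    (fun x hx y hy => abs_le_mul_abs_of_sSup_le_mul_sInf isCompact_Icc
      (hf.continuousOn_iteratedDerivWithin le_rfl (uniqueDiffOn_Icc hlt)) hA hsup hx hy) hφ hzero

/-- **Theorem 1.1 (case k ≥ 2).** For each integer `k ≥ 2` and `A > 0` there is a constant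
`B > 0`, depending only on `A` and `k`, such that for every compact interval `[a,b]`, every
`k` times continuously differentiable `f : [a,b] → ℝ` with
`sup_{[a,b]} |f⁽ᵏ⁾| < A · inf_{[a,b]} |f⁽ᵏ⁾|`, and every `C¹` function `φ : [a,b] → ℂ`,
`|∫_a^b e^{i f} φ| ≤ B (‖φ‖_∞ + ‖φ'‖_{L¹}) (∫_a^b min(1, |f''|/(f')²) + min(b-a, 1/sup|f'|))`.
Here `|f''(x)|/(f'(x))²` is interpreted as `+∞` (so the min is `1`) where `f'(x) = 0`, and
`1/sup|f'|` as `+∞` (so the min is `b - a`) if `f'` vanishes identically. -/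
theorem stmt0 (k : ℕ) (hk : 2 ≤ k) (A : ℝ) (hA : 0 < A) :
    ∃ B : ℝ, 0 < B ∧
      ∀ (a b : ℝ), a ≤ b →
      ∀ f : ℝ → ℝ, ContDiffOn ℝ k f (Icc a b) →
      sSup ((fun x => |iteratedDerivWithin k f (Icc a b) x|) '' Icc a b) <
        A * sInf ((fun x => |iteratedDerivWithin k f (Icc a b) x|) '' Icc a b) →
      ∀ φ : ℝ → ℂ, ContDiffOn ℝ 1 φ (Icc a b) →
      ‖∫ x in a..b, Complex.exp (Complex.I * (f x : ℂ)) * φ x‖ ≤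
        B * (sSup ((fun x => ‖φ x‖) '' Icc a b) + ∫ x in a..b, ‖derivWithin φ (Icc a b) x‖) *
        ((∫ x in a..b,
            if iteratedDerivWithin 1 f (Icc a b) x = 0 then (1 : ℝ)
            else min 1 (|iteratedDerivWithin 2 f (Icc a b) x| /
              (iteratedDerivWithin 1 f (Icc a b) x) ^ 2)) +
          (if sSup ((fun x => |iteratedDerivWithin 1 f (Icc a b) x|) '' Icc a b) = 0 then b - a
           else min (b - a)
             (1 / sSup ((fun x => |iteratedDerivWithin 1 f (Icc a b) x|) '' Icc a b)))) := by
  obtain ⟨B, hB, hbound⟩ := stmt0_general k hk A hA.le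
  exact ⟨B, hB, fun a b hab f hf hsup φ hφ => hbound a b hab f hf hsup.le ℂ φ hφ⟩
end

section
/- Let A > 0. There exists a constant B > 0, depending only on A, with the following property. Let [a,b] be a compact interval, let f : [a,b] → ℝ be C² with sup_{x∈[a,b]} |f'(x)| < A · inf_{x∈[a,b]} |f'(x)| (in particular f' is nonvanishing on [a,b]), suppose [a,b] can be written as the union of j subintervals on each of which f' is monotonic, and let φ : [a,b] → ℂ be C¹. Then |∫_a^b e^{i f(x)} φ(x) dx| ≤ j·B (‖φ‖_{L^∞} + ‖φ'‖_{L^1}) ( ∫_a^b min(1, |f''(x)| / (f'(x))²) dx + min( b − a, 1 / sup_{x∈[a,b]} |f'(x)| ) ). -/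
open Set MeasureTheory

/-!
Writing `e^{if} = (-i e^{if})' / f'` and integrating by parts once bounds `∫ e^{if} φ` by
`(2 ‖φ‖_∞ + ‖φ'‖_{L¹}) / inf |f'| + ‖φ‖_∞ ∫ |f''| / f'²`. Where `f'` is monotone, `f''` has constant
sign, so `∫ |f''| / f'²` is a difference of two values of `1 / f'`, at most `2 / inf |f'|`; the `j`
pieces together give at most `2 j / inf |f'|`. Combined with the trivial bound `(b - a) ‖φ‖_∞`, this
controls the integral by `4 j (‖φ‖_∞ + ‖φ'‖_{L¹}) min (b - a) (1 / inf |f'|)`, and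
`1 / inf |f'| ≤ A / sup |f'|`. The integral of `min (1, |f''| / f'²)` enters only through its
nonnegativity.
-/

lemma intervalIntegrable_div_sq {g h : ℝ → ℝ} {a b : ℝ} (hab : a ≤ b)
    (hh : IntervalIntegrable h volume a b) (hg : ContinuousOn g (Icc a b))
    (hg0 : ∀ x ∈ Icc a b, g x ≠ 0) :
    IntervalIntegrable (fun x => h x / g x ^ 2) volume a b := by
  rw [← uIcc_of_le hab] at hg hg0
  simp only [div_eq_mul_inv]
  exact hh.mul_continuousOn ((hg.pow 2).inv₀ fun x hx => pow_ne_zero 2 (hg0 x hx))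

section OscillatoryIntegral

variable {E : Type*} [NormedAddCommGroup E] [NormedSpace ℂ E] {a b : ℝ}

lemma norm_integral_deriv_smul_le [CompleteSpace E] {u u' : ℝ → ℂ} {v v' : ℝ → E} {C : ℝ}
    (hab : a ≤ b)
    (hu : ∀ x ∈ Icc a b, HasDerivWithinAt u (u' x) (Icc a b) x)
    (hv : ∀ x ∈ Icc a b, HasDerivWithinAt v (v' x) (Icc a b) x)
    (hu' : IntervalIntegrable u' volume a b) (hv' : IntervalIntegrable v' volume a b)
    (hC : ∀ x ∈ Icc a b, ‖u x‖ ≤ C) :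
    ‖∫ x in a..b, u' x • v x‖ ≤ C * (‖v a‖ + ‖v b‖ + ∫ x in a..b, ‖v' x‖) := by
  have hparts : ∫ x in a..b, u' x • v x = u b • v b - u a • v a - ∫ x in a..b, u x • v' x := by
    rw [← uIcc_of_le hab] at hu hv
    rw [intervalIntegral.integral_smul_deriv_eq_deriv_smul_of_hasDerivWithinAt hu hv hu' hv',
      sub_sub_cancel]
  have hsmul : ∀ x ∈ Icc a b, ∀ w : E, ‖u x • w‖ ≤ C * ‖w‖ := fun x hx w => by
    rw [norm_smul]
    exact mul_le_mul_of_nonneg_right (hC x hx) (norm_nonneg w)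
  have hrest : ‖∫ x in a..b, u x • v' x‖ ≤ C * ∫ x in a..b, ‖v' x‖ := by
    rw [← intervalIntegral.integral_const_mul]
    exact intervalIntegral.norm_integral_le_of_norm_le hab
      (ae_of_all _ fun x hx => hsmul x (Ioc_subset_Icc_self hx) _) (hv'.norm.const_mul C)
  calc ‖∫ x in a..b, u' x • v x‖
      ≤ ‖u b • v b‖ + ‖u a • v a‖ + ‖∫ x in a..b, u x • v' x‖ := by
        rw [hparts]
        exact (norm_sub_le _ _).trans (add_le_add_left (norm_sub_le _ _) _)
    _ ≤ C * ‖v b‖ + C * ‖v a‖ + C * ∫ x in a..b, ‖v' x‖ :=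
        add_le_add (add_le_add (hsmul b (right_mem_Icc.2 hab) _) (hsmul a (left_mem_Icc.2 hab) _))
          hrest
    _ = C * (‖v a‖ + ‖v b‖ + ∫ x in a..b, ‖v' x‖) := by ring

lemma norm_integral_exp_smul_le_mul_sub {f : ℝ → ℝ} {φ : ℝ → E} {P : ℝ} (hab : a ≤ b)
    (hP : ∀ x ∈ Icc a b, ‖φ x‖ ≤ P) :
    ‖∫ x in a..b, Complex.exp (Complex.I * (f x : ℂ)) • φ x‖ ≤ P * (b - a) := by
  rw [← abs_of_nonneg (sub_nonneg.2 hab)]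
  refine intervalIntegral.norm_integral_le_of_norm_le_const fun x hx => ?_
  rw [norm_smul, Complex.norm_exp_I_mul_ofReal, one_mul]
  exact hP x (Ioc_subset_Icc_self (uIoc_of_le hab ▸ hx))

lemma norm_integral_exp_smul_le_norm_inv_smul [CompleteSpace E] {f g h : ℝ → ℝ} {φ ψ : ℝ → E}
    (hab : a ≤ b)
    (hf : ∀ x ∈ Icc a b, HasDerivWithinAt f (g x) (Icc a b) x)
    (hg : ∀ x ∈ Icc a b, HasDerivWithinAt g (h x) (Icc a b) x)
    (hφ : ∀ x ∈ Icc a b, HasDerivWithinAt φ (ψ x) (Icc a b) x)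
    (hh : IntervalIntegrable h volume a b) (hψ : IntervalIntegrable ψ volume a b)
    (hg0 : ∀ x ∈ Icc a b, g x ≠ 0) :
    ‖∫ x in a..b, Complex.exp (Complex.I * (f x : ℂ)) • φ x‖ ≤
      ‖(g a)⁻¹ • φ a‖ + ‖(g b)⁻¹ • φ b‖ +
        ∫ x in a..b, ‖(g x)⁻¹ • ψ x + (-h x / g x ^ 2) • φ x‖ := by
  let u : ℝ → ℂ := fun x => -Complex.I * Complex.exp (Complex.I * (f x : ℂ))
  let u' : ℝ → ℂ := fun x => Complex.exp (Complex.I * (f x : ℂ)) * (g x : ℂ)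
  have hfc : ContinuousOn f (Icc a b) := HasDerivWithinAt.continuousOn hf
  have hgc : ContinuousOn g (Icc a b) := HasDerivWithinAt.continuousOn hg
  have hφc : ContinuousOn φ (Icc a b) := HasDerivWithinAt.continuousOn hφ
  have hu : ∀ x ∈ Icc a b, HasDerivWithinAt u (u' x) (Icc a b) x := fun x hx => by
    refine (((hf x hx).ofReal_comp.const_mul Complex.I).cexp.const_mul (-Complex.I)).congr_deriv ?_
    linear_combination -(u' x) * Complex.I_sq
  have hv : ∀ x ∈ Icc a b, HasDerivWithinAt (fun x => (g x)⁻¹ • φ x)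
      ((g x)⁻¹ • ψ x + (-h x / g x ^ 2) • φ x) (Icc a b) x := fun x hx =>
    ((hg x hx).fun_inv (hg0 x hx)).smul (hφ x hx)
  have hu' : IntervalIntegrable u' volume a b := by
    refine ContinuousOn.intervalIntegrable_of_Icc hab ?_
    fun_prop
  have hv' : IntervalIntegrable (fun x => (g x)⁻¹ • ψ x + (-h x / g x ^ 2) • φ x) volume a b := by
    have hquot := intervalIntegrable_div_sq hab hh.neg hgc hg0
    rw [← uIcc_of_le hab] at hgc hφc hg0
    exact (hψ.continuousOn_smul (hgc.inv₀ hg0)).add (hquot.smul_continuousOn hφc)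
  have hintegrand : ∫ x in a..b, Complex.exp (Complex.I * (f x : ℂ)) • φ x =
      ∫ x in a..b, u' x • (g x)⁻¹ • φ x := by
    refine intervalIntegral.integral_congr fun x hx => ?_
    rw [uIcc_of_le hab] at hx
    simp only [u', mul_smul, Complex.coe_smul, smul_inv_smul₀ (hg0 x hx)]
  have hnorm : ∀ x ∈ Icc a b, ‖u x‖ ≤ 1 := fun x _ => by
    simp only [u, norm_mul, norm_neg, Complex.norm_I, Complex.norm_exp_I_mul_ofReal, mul_one,
      le_refl]
  simpa only [hintegrand, one_mul] using norm_integral_deriv_smul_le hab hu hv hu' hv' hnorm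

lemma norm_integral_exp_smul_le [CompleteSpace E] {f g h : ℝ → ℝ} {φ ψ : ℝ → E} {m P : ℝ}
    (hab : a ≤ b) (hm : 0 < m)
    (hf : ∀ x ∈ Icc a b, HasDerivWithinAt f (g x) (Icc a b) x)
    (hg : ∀ x ∈ Icc a b, HasDerivWithinAt g (h x) (Icc a b) x)
    (hφ : ∀ x ∈ Icc a b, HasDerivWithinAt φ (ψ x) (Icc a b) x)
    (hh : IntervalIntegrable h volume a b) (hψ : IntervalIntegrable ψ volume a b)
    (hgm : ∀ x ∈ Icc a b, m ≤ |g x|) (hP : ∀ x ∈ Icc a b, ‖φ x‖ ≤ P) :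
    ‖∫ x in a..b, Complex.exp (Complex.I * (f x : ℂ)) • φ x‖ ≤
      (2 * P + ∫ x in a..b, ‖ψ x‖) / m + P * ∫ x in a..b, |h x| / g x ^ 2 := by
  have hg0 : ∀ x ∈ Icc a b, g x ≠ 0 := fun x hx => abs_pos.1 (hm.trans_le (hgm x hx))
  have hinv : ∀ x ∈ Icc a b, ∀ w : E, ‖(g x)⁻¹ • w‖ ≤ ‖w‖ / m := fun x hx w => by
    rw [norm_smul, norm_inv, Real.norm_eq_abs, inv_mul_eq_div]
    exact div_le_div_of_nonneg_left (norm_nonneg w) hm (hgm x hx)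
  have hboundary : ∀ x ∈ Icc a b, ‖(g x)⁻¹ • φ x‖ ≤ P / m := fun x hx =>
    (hinv x hx _).trans (div_le_div_of_nonneg_right (hP x hx) hm.le)
  have hderiv : ∀ x ∈ Icc a b, ‖(g x)⁻¹ • ψ x + (-h x / g x ^ 2) • φ x‖ ≤
      ‖ψ x‖ / m + P * (|h x| / g x ^ 2) := fun x hx => by
    refine (norm_add_le _ _).trans (add_le_add (hinv x hx _) ?_)
    rw [norm_smul, norm_div, norm_neg, norm_pow, Real.norm_eq_abs, Real.norm_eq_abs, sq_abs,
      mul_comm]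
    exact mul_le_mul_of_nonneg_right (hP x hx) (by positivity)
  have hquot : IntervalIntegrable (fun x => P * (|h x| / g x ^ 2)) volume a b :=
    (intervalIntegrable_div_sq hab hh.abs (HasDerivWithinAt.continuousOn hg) hg0).const_mul P
  have hψm : IntervalIntegrable (fun x => ‖ψ x‖ / m) volume a b := hψ.norm.div_const m
  calc ‖∫ x in a..b, Complex.exp (Complex.I * (f x : ℂ)) • φ x‖
      ≤ ‖(g a)⁻¹ • φ a‖ + ‖(g b)⁻¹ • φ b‖ +
          ∫ x in a..b, ‖(g x)⁻¹ • ψ x + (-h x / g x ^ 2) • φ x‖ :=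
        norm_integral_exp_smul_le_norm_inv_smul hab hf hg hφ hh hψ hg0
    _ ≤ P / m + P / m + ∫ x in a..b, (‖ψ x‖ / m + P * (|h x| / g x ^ 2)) := by
        refine add_le_add (add_le_add (hboundary a (left_mem_Icc.2 hab))
          (hboundary b (right_mem_Icc.2 hab))) ?_
        exact (Real.le_norm_self _).trans (intervalIntegral.norm_integral_le_of_norm_le hab
          (ae_of_all _ fun x hx => (norm_norm _).trans_le (hderiv x (Ioc_subset_Icc_self hx)))
          (hψm.add hquot))
    _ = (2 * P + ∫ x in a..b, ‖ψ x‖) / m + P * ∫ x in a..b, |h x| / g x ^ 2 := by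
        rw [intervalIntegral.integral_add hψm hquot, intervalIntegral.integral_div,
          intervalIntegral.integral_const_mul]
        ring

end OscillatoryIntegral

section Variation

variable {g h : ℝ → ℝ} {a b m : ℝ}

lemma integral_abs_deriv_div_sq_of_monotoneOn (hab : a ≤ b)
    (hg : ∀ x ∈ Icc a b, HasDerivWithinAt g (h x) (Icc a b) x)
    (hg0 : ∀ x ∈ Icc a b, g x ≠ 0) (hmono : MonotoneOn g (Icc a b)) :
    ∫ x in a..b, |h x| / g x ^ 2 = (g a)⁻¹ - (g b)⁻¹ := by
  have habs : ∀ x ∈ Ioo a b, |h x| = h x := fun x hx => by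
    have hx' := Ioo_subset_Icc_self hx
    exact abs_of_nonneg ((hg x hx').nonneg_of_monotoneOn
      (uniqueDiffOn_Icc (hx.1.trans hx.2) x hx').accPt hmono)
  have hcont : ContinuousOn (fun x => -(g x)⁻¹) (Icc a b) :=
    ((HasDerivWithinAt.continuousOn hg).inv₀ hg0).neg
  have hderiv : ∀ x ∈ Ioo a b, HasDerivAt (fun x => -(g x)⁻¹) (|h x| / g x ^ 2) x := fun x hx => by
    have hx' := Ioo_subset_Icc_self hx
    have hinv := ((hg x hx').hasDerivAt (Icc_mem_nhds hx.1 hx.2)).fun_inv (hg0 x hx')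
    exact hinv.fun_neg.congr_deriv (by rw [habs x hx, neg_div, neg_neg])
  have hint : IntervalIntegrable (fun x => |h x| / g x ^ 2) volume a b :=
    (intervalIntegrable_iff_integrableOn_Ioc_of_le hab).2
      (intervalIntegral.integrableOn_deriv_of_nonneg hcont hderiv fun x _ => by positivity)
  rw [intervalIntegral.integral_eq_sub_of_hasDerivAt_of_le hab hcont hderiv hint]
  ring

lemma integral_abs_deriv_div_sq_of_antitoneOn (hab : a ≤ b)
    (hg : ∀ x ∈ Icc a b, HasDerivWithinAt g (h x) (Icc a b) x)
    (hg0 : ∀ x ∈ Icc a b, g x ≠ 0) (hanti : AntitoneOn g (Icc a b)) :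
    ∫ x in a..b, |h x| / g x ^ 2 = (g b)⁻¹ - (g a)⁻¹ := by
  have hneg := integral_abs_deriv_div_sq_of_monotoneOn hab (fun x hx => (hg x hx).fun_neg)
    (fun x hx => neg_ne_zero.2 (hg0 x hx)) hanti.neg
  simp only [abs_neg, neg_sq, inv_neg] at hneg
  rw [hneg]
  ring

lemma integral_abs_deriv_div_sq_le_two_div (hab : a ≤ b) (hm : 0 < m)
    (hg : ∀ x ∈ Icc a b, HasDerivWithinAt g (h x) (Icc a b) x) (hgm : ∀ x ∈ Icc a b, m ≤ |g x|)
    (hmono : MonotoneOn g (Icc a b) ∨ AntitoneOn g (Icc a b)) :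
    ∫ x in a..b, |h x| / g x ^ 2 ≤ 2 / m := by
  have hg0 : ∀ x ∈ Icc a b, g x ≠ 0 := fun x hx => abs_pos.1 (hm.trans_le (hgm x hx))
  have hinv : ∀ x ∈ Icc a b, |(g x)⁻¹| ≤ 1 / m := fun x hx => by
    rw [abs_inv, ← one_div]
    exact one_div_le_one_div_of_le hm (hgm x hx)
  have hdiff : ∀ x ∈ Icc a b, ∀ y ∈ Icc a b, (g x)⁻¹ - (g y)⁻¹ ≤ 2 / m := fun x hx y hy =>
    calc (g x)⁻¹ - (g y)⁻¹ ≤ |(g x)⁻¹| + |(g y)⁻¹| := (le_abs_self _).trans (abs_sub _ _)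
      _ ≤ 1 / m + 1 / m := add_le_add (hinv x hx) (hinv y hy)
      _ = 2 / m := by ring
  have ha := left_mem_Icc.2 hab
  have hb := right_mem_Icc.2 hab
  rcases hmono with hmono | hanti
  · exact (integral_abs_deriv_div_sq_of_monotoneOn hab hg hg0 hmono).trans_le (hdiff a ha b hb)
  · exact (integral_abs_deriv_div_sq_of_antitoneOn hab hg hg0 hanti).trans_le (hdiff b hb a ha)

lemma Icc_subset_Icc_of_le_succ {c : ℕ → ℝ} {j : ℕ} (hc : ∀ i < j, c i ≤ c (i + 1)) :
    ∀ i < j, Icc (c i) (c (i + 1)) ⊆ Icc (c 0) (c j) := by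
  have hmono : MonotoneOn c (Iic j) :=
    monotoneOn_of_le_add_one ordConnected_Iic fun k _ _ hk => hc k hk
  exact fun i hi => Icc_subset_Icc (hmono (mem_Iic.2 j.zero_le) (mem_Iic.2 hi.le) i.zero_le)
    (hmono (mem_Iic.2 hi) self_mem_Iic hi)

lemma integral_abs_deriv_div_sq_le_of_piecewise_monotoneOn {c : ℕ → ℝ} {j : ℕ} (hm : 0 < m)
    (hg : ∀ x ∈ Icc (c 0) (c j), HasDerivWithinAt g (h x) (Icc (c 0) (c j)) x)
    (hgm : ∀ x ∈ Icc (c 0) (c j), m ≤ |g x|) (hh : IntervalIntegrable h volume (c 0) (c j))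
    (hc : ∀ i < j, c i ≤ c (i + 1))
    (hmono : ∀ i < j, MonotoneOn g (Icc (c i) (c (i + 1))) ∨
      AntitoneOn g (Icc (c i) (c (i + 1)))) :
    ∫ x in c 0..c j, |h x| / g x ^ 2 ≤ j * (2 / m) := by
  have hsub := Icc_subset_Icc_of_le_succ hc
  have hle : ∀ i < j, c 0 ≤ c j := fun i hi =>
    nonempty_Icc.1 ((nonempty_Icc.2 (hc i hi)).mono (hsub i hi))
  have hint : ∀ i < j, IntervalIntegrable (fun x => |h x| / g x ^ 2) volume (c i) (c (i + 1)) :=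
    fun i hi => by
      refine intervalIntegrable_div_sq (hc i hi) (hh.abs.mono_set ?_)
        ((HasDerivWithinAt.continuousOn hg).mono (hsub i hi))
        fun x hx => abs_pos.1 (hm.trans_le (hgm x (hsub i hi hx)))
      rw [uIcc_of_le (hc i hi), uIcc_of_le (hle i hi)]
      exact hsub i hi
  calc ∫ x in c 0..c j, |h x| / g x ^ 2
      = ∑ i ∈ Finset.range j, ∫ x in c i..c (i + 1), |h x| / g x ^ 2 :=
        (intervalIntegral.sum_integral_adjacent_intervals hint).symm
    _ ≤ ∑ _i ∈ Finset.range j, 2 / m := by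
        refine Finset.sum_le_sum fun i hi => ?_
        have hi := Finset.mem_range.1 hi
        exact integral_abs_deriv_div_sq_le_two_div (hc i hi) hm
          (fun x hx => (hg x (hsub i hi hx)).mono (hsub i hi))
          (fun x hx => hgm x (hsub i hi hx)) (hmono i hi)
    _ = j * (2 / m) := by rw [Finset.sum_const, Finset.card_range, nsmul_eq_mul]

end Variation

lemma norm_integral_exp_smul_le_of_piecewise_monotoneOn {E : Type*} [NormedAddCommGroup E]
    [NormedSpace ℂ E] [CompleteSpace E] {f g h : ℝ → ℝ} {φ ψ : ℝ → E} {c : ℕ → ℝ} {j : ℕ} {m P : ℝ}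
    (hlt : c 0 < c j) (hm : 0 < m)
    (hf : ∀ x ∈ Icc (c 0) (c j), HasDerivWithinAt f (g x) (Icc (c 0) (c j)) x)
    (hg : ∀ x ∈ Icc (c 0) (c j), HasDerivWithinAt g (h x) (Icc (c 0) (c j)) x)
    (hφ : ∀ x ∈ Icc (c 0) (c j), HasDerivWithinAt φ (ψ x) (Icc (c 0) (c j)) x)
    (hh : IntervalIntegrable h volume (c 0) (c j)) (hψ : IntervalIntegrable ψ volume (c 0) (c j))
    (hgm : ∀ x ∈ Icc (c 0) (c j), m ≤ |g x|) (hP : ∀ x ∈ Icc (c 0) (c j), ‖φ x‖ ≤ P)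
    (hc : ∀ i < j, c i ≤ c (i + 1))
    (hmono : ∀ i < j, MonotoneOn g (Icc (c i) (c (i + 1))) ∨
      AntitoneOn g (Icc (c i) (c (i + 1)))) :
    ‖∫ x in c 0..c j, Complex.exp (Complex.I * (f x : ℂ)) • φ x‖ ≤
      4 * j * (P + ∫ x in c 0..c j, ‖ψ x‖) * min (c j - c 0) (1 / m) := by
  set V := ∫ x in c 0..c j, ‖ψ x‖
  have hP0 : 0 ≤ P := (norm_nonneg _).trans (hP (c 0) (left_mem_Icc.2 hlt.le))
  have hV0 : 0 ≤ V := intervalIntegral.integral_nonneg hlt.le fun _ _ => norm_nonneg _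
  have hj : (1 : ℝ) ≤ j := by
    rw [Nat.one_le_cast, Nat.one_le_iff_ne_zero]
    rintro rfl
    exact hlt.false
  have hjP : P ≤ j * P := le_mul_of_one_le_left hP0 hj
  have hjV : V ≤ j * V := le_mul_of_one_le_left hV0 hj
  rw [mul_min_of_nonneg _ _ (by positivity)]
  refine le_min ?_ ?_
  · refine (norm_integral_exp_smul_le_mul_sub hlt.le hP).trans
      (mul_le_mul_of_nonneg_right ?_ (sub_pos.2 hlt).le)
    linarith
  · calc ‖∫ x in c 0..c j, Complex.exp (Complex.I * (f x : ℂ)) • φ x‖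
        ≤ (2 * P + V) / m + P * ∫ x in c 0..c j, |h x| / g x ^ 2 :=
          norm_integral_exp_smul_le hlt.le hm hf hg hφ hh hψ hgm hP
      _ ≤ (2 * P + V) / m + P * (j * (2 / m)) := by
          gcongr
          exact integral_abs_deriv_div_sq_le_of_piecewise_monotoneOn hm hg hgm hh hc hmono
      _ = (2 * P + V + 2 * (j * P)) * (1 / m) := by ring
      _ ≤ 4 * j * (P + V) * (1 / m) := by
          gcongr
          linarith

lemma sSup_norm_add_integral_norm_nonneg {E F : Type*} [SeminormedAddCommGroup E]
    [SeminormedAddCommGroup F] {a b : ℝ} (hab : a ≤ b) (s : Set ℝ) (φ : ℝ → E) (ψ : ℝ → F) :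
    0 ≤ sSup ((fun x => ‖φ x‖) '' s) + ∫ x in a..b, ‖ψ x‖ :=
  add_nonneg (Real.sSup_nonneg (forall_mem_image.2 fun _ _ => norm_nonneg _))
    (intervalIntegral.integral_nonneg hab fun _ _ => norm_nonneg _)

lemma norm_integral_exp_smul_le_of_sInf_pos {E : Type*} [NormedAddCommGroup E] [NormedSpace ℂ E]
    [CompleteSpace E] {f : ℝ → ℝ} {φ : ℝ → E} {c : ℕ → ℝ} {j : ℕ} (hlt : c 0 < c j)
    (hf : ContDiffOn ℝ 2 f (Icc (c 0) (c j))) (hφ : ContDiffOn ℝ 1 φ (Icc (c 0) (c j)))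
    (hpos : 0 < sInf ((fun x => |derivWithin f (Icc (c 0) (c j)) x|) '' Icc (c 0) (c j)))
    (hc : ∀ i < j, c i ≤ c (i + 1))
    (hmono : ∀ i < j, MonotoneOn (derivWithin f (Icc (c 0) (c j))) (Icc (c i) (c (i + 1))) ∨
      AntitoneOn (derivWithin f (Icc (c 0) (c j))) (Icc (c i) (c (i + 1)))) :
    ‖∫ x in c 0..c j, Complex.exp (Complex.I * (f x : ℂ)) • φ x‖ ≤
      4 * j * (sSup ((fun x => ‖φ x‖) '' Icc (c 0) (c j)) +
          ∫ x in c 0..c j, ‖derivWithin φ (Icc (c 0) (c j)) x‖) *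
        min (c j - c 0)
          (1 / sInf ((fun x => |derivWithin f (Icc (c 0) (c j)) x|) '' Icc (c 0) (c j))) := by
  have hud := uniqueDiffOn_Icc hlt
  have hg : ContDiffOn ℝ 1 (derivWithin f (Icc (c 0) (c j))) (Icc (c 0) (c j)) :=
    hf.derivWithin hud one_add_one_eq_two.le
  exact norm_integral_exp_smul_le_of_piecewise_monotoneOn hlt hpos
    (fun x hx => (hf.differentiableOn two_ne_zero x hx).hasDerivWithinAt)
    (fun x hx => (hg.differentiableOn one_ne_zero x hx).hasDerivWithinAt)
    (fun x hx => (hφ.differentiableOn one_ne_zero x hx).hasDerivWithinAt)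
    ((hg.continuousOn_derivWithin hud le_rfl).intervalIntegrable_of_Icc hlt.le)
    ((hφ.continuousOn_derivWithin hud le_rfl).intervalIntegrable_of_Icc hlt.le)
    (fun x hx => csInf_le ⟨0, forall_mem_image.2 fun _ _ => abs_nonneg _⟩ (mem_image_of_mem _ hx))
    (fun x hx =>
      le_csSup (isCompact_Icc.bddAbove_image hφ.continuousOn.norm) (mem_image_of_mem _ hx))
    hc hmono

lemma min_one_div_le_mul_min_one_div {L m M A : ℝ} (hL : 0 ≤ L) (hm : 0 < m) (hmM : m ≤ M)
    (hMA : M ≤ A * m) : min L (1 / m) ≤ A * min L (1 / M) := by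
  have hA : 1 ≤ A := le_of_mul_le_mul_right (by linarith) hm
  rw [mul_min_of_nonneg _ _ (by linarith)]
  refine min_le_min (le_mul_of_one_le_left hL hA) ?_
  rw [mul_one_div, div_le_div_iff₀ hm (hm.trans_le hmM), one_mul]
  exact hMA

lemma sInf_pos_of_sSup_lt_mul_sInf {s : Set ℝ} {A : ℝ} (hs : ∀ x ∈ s, 0 ≤ x)
    (h : sSup s < A * sInf s) : 0 < sInf s := by
  refine (Real.sInf_nonneg hs).lt_of_ne' fun h0 => ?_
  rw [h0, mul_zero] at h
  exact h.not_ge (Real.sSup_nonneg hs)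

theorem stmt1_general {E : Type*} [NormedAddCommGroup E] [NormedSpace ℂ E] [CompleteSpace E]
    {a b A : ℝ} (hab : a ≤ b) {f : ℝ → ℝ} (hf : ContDiffOn ℝ 2 f (Icc a b))
    (hsup : sSup ((fun x => |iteratedDerivWithin 1 f (Icc a b) x|) '' Icc a b) <
      A * sInf ((fun x => |iteratedDerivWithin 1 f (Icc a b) x|) '' Icc a b))
    {j : ℕ} {c : ℕ → ℝ} (hc0 : c 0 = a) (hcj : c j = b) (hc : ∀ i < j, c i ≤ c (i + 1))
    (hmono : ∀ i < j, MonotoneOn (iteratedDerivWithin 1 f (Icc a b)) (Icc (c i) (c (i + 1))) ∨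
      AntitoneOn (iteratedDerivWithin 1 f (Icc a b)) (Icc (c i) (c (i + 1))))
    {φ : ℝ → E} (hφ : ContDiffOn ℝ 1 φ (Icc a b)) :
    ‖∫ x in a..b, Complex.exp (Complex.I * (f x : ℂ)) • φ x‖ ≤
      j * (4 * A) *
        (sSup ((fun x => ‖φ x‖) '' Icc a b) + ∫ x in a..b, ‖derivWithin φ (Icc a b) x‖) *
        min (b - a) (1 / sSup ((fun x => |iteratedDerivWithin 1 f (Icc a b) x|) '' Icc a b)) := by
  have hnonneg : ∀ y ∈ (fun x => |iteratedDerivWithin 1 f (Icc a b) x|) '' Icc a b, 0 ≤ y :=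
    forall_mem_image.2 fun _ _ => abs_nonneg _
  have hpos := sInf_pos_of_sSup_lt_mul_sInf hnonneg hsup
  rcases hab.eq_or_lt with rfl | hlt
  · rw [intervalIntegral.integral_same, norm_zero, sub_self,
      min_eq_left (one_div_nonneg.2 (Real.sSup_nonneg hnonneg)), mul_zero]
  subst hc0 hcj
  rw [iteratedDerivWithin_one] at *
  have hcont : ContinuousOn (derivWithin f (Icc (c 0) (c j))) (Icc (c 0) (c j)) :=
    hf.continuousOn_derivWithin (uniqueDiffOn_Icc hlt) one_le_two
  have hinf_le_sup := Real.sInf_le_sSup _ ⟨0, hnonneg⟩ (isCompact_Icc.bddAbove_image hcont.abs)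
  have hnorms := sSup_norm_add_integral_norm_nonneg hab (Icc (c 0) (c j)) φ
    (derivWithin φ (Icc (c 0) (c j)))
  refine (norm_integral_exp_smul_le_of_sInf_pos hlt hf hφ hpos hc hmono).trans ?_
  refine (mul_le_mul_of_nonneg_left (min_one_div_le_mul_min_one_div (sub_nonneg.2 hab) hpos
    hinf_le_sup hsup.le) (by positivity)).trans_eq ?_
  ring

/-- **Theorem 1.1 (case k = 1).** For each `A > 0` there is a constant `B > 0`, depending only
on `A`, such that: for every compact interval `[a,b]`, every `C²` function `f : [a,b] → ℝ` with
`sup_{[a,b]} |f'| < A · inf_{[a,b]} |f'|`, if `[a,b]` is the union of `j` subintervals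
(given by partition points `c 0 = a ≤ c 1 ≤ ... ≤ c j = b`) on each of which `f'` is monotonic,
then for every `C¹` function `φ : [a,b] → ℂ`,
`|∫_a^b e^{i f} φ| ≤ j·B (‖φ‖_∞ + ‖φ'‖_{L¹}) (∫_a^b min(1, |f''|/(f')²) + min(b-a, 1/sup|f'|))`.
Here `|f''(x)|/(f'(x))²` is interpreted as `+∞` (so the min is `1`) where `f'(x) = 0`. -/
theorem stmt1 (A : ℝ) (hA : 0 < A) :
    ∃ B : ℝ, 0 < B ∧
      ∀ (a b : ℝ), a ≤ b →
      ∀ f : ℝ → ℝ, ContDiffOn ℝ 2 f (Icc a b) →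
      sSup ((fun x => |iteratedDerivWithin 1 f (Icc a b) x|) '' Icc a b) <
        A * sInf ((fun x => |iteratedDerivWithin 1 f (Icc a b) x|) '' Icc a b) →
      ∀ (j : ℕ) (c : ℕ → ℝ), c 0 = a → c j = b → (∀ i < j, c i ≤ c (i + 1)) →
      (∀ i < j, MonotoneOn (iteratedDerivWithin 1 f (Icc a b)) (Icc (c i) (c (i + 1))) ∨
        AntitoneOn (iteratedDerivWithin 1 f (Icc a b)) (Icc (c i) (c (i + 1)))) →
      ∀ φ : ℝ → ℂ, ContDiffOn ℝ 1 φ (Icc a b) →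
      ‖∫ x in a..b, Complex.exp (Complex.I * (f x : ℂ)) * φ x‖ ≤
        (j : ℝ) * B *
          (sSup ((fun x => ‖φ x‖) '' Icc a b) + ∫ x in a..b, ‖derivWithin φ (Icc a b) x‖) *
        ((∫ x in a..b,
            if iteratedDerivWithin 1 f (Icc a b) x = 0 then (1 : ℝ)
            else min 1 (|iteratedDerivWithin 2 f (Icc a b) x| /
              (iteratedDerivWithin 1 f (Icc a b) x) ^ 2)) +
          (if sSup ((fun x => |iteratedDerivWithin 1 f (Icc a b) x|) '' Icc a b) = 0 then b - a
           else min (b - a)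
             (1 / sSup ((fun x => |iteratedDerivWithin 1 f (Icc a b) x|) '' Icc a b)))) := by
  refine ⟨4 * A, by positivity, fun a b hab f hf hsup j c hc0 hcj hc hmono φ hφ =>
    (stmt1_general hab hf hsup hc0 hcj hc hmono hφ).trans (mul_le_mul_of_nonneg_left ?_
      (mul_nonneg (by positivity) (sSup_norm_add_integral_norm_nonneg hab _ _ _)))⟩
  refine le_add_of_nonneg_of_le
    (intervalIntegral.integral_nonneg hab fun x _ => by split_ifs <;> positivity) ?_
  split_ifs
  · exact min_le_left _ _
  · exact le_rfl
end

section
/- There exists a universal constant B > 0 with the following property. Let f : [a,b] → ℝ be C³ such that the set {x ∈ [a,b] : f'''(x) = 0} is finite, and let φ : [a,b] → ℂ be C¹. Let J denote the (finite) set of points x ∈ [a,b] such that f'(x) ≠ 0 and either x = a, x = b, f''(x) = 0, or f'''(x) = 0. Then |∫_a^b e^{i f(x)} φ(x) dx| ≤ B (‖φ‖_{L^∞} + ‖φ'‖_{L^1}) ( ∫_a^b min(1, |f''(x)| / (f'(x))²) dx + min( b − a, Σ_{x ∈ J} 1/|f'(x)| ) ). -/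
open Set MeasureTheory

/-!
Integration by parts against the primitive of `e^{if}` removes the amplitude, so it suffices to
bound `∫ e^{if}` over all initial segments; the length of the interval is always a bound, and only
the one with the sum over `J` is at stake.

By Rolle's theorem `f'`, `f''` and `f'''` have finitely many zeros; cut the interval there. On a
piece `[c, d]`, conjugation (`f ↦ -f`) and reflection (`x ↦ -x`) reduce to `f' ≥ 0` and `f'' > 0`.
If `f'(c) > 0`, the first derivative test bounds the integral by `2 / f'(c)`. If `f'(c) = 0`, the
trivial bound on `[c, t]` and the first derivative test on `[t, d]` give `(t - c) + 2 / f'(t)`,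
and both terms are controlled by `∫ min(1, |f''| / f'²)` and `1 / f'(d)` for a good choice of `t`:

* If `f''` is increasing, take `(t - c) f'(t) = 1`, or `t = d` if there is no such point. For
  `s ≤ t` the mean value theorem gives `f'(s) ≤ (s - c) f''(s)`, hence `f'(s)² ≤ f''(s)`: the
  density is `1` on `(c, t)`, and `1 / f'(t) = t - c`.
* If `f''` is decreasing, so is `f'' - f'²`; take its zero, or `t = d` if it has none. The density
  is `1` on `(c, t)` and `-(1 / f')'` on `(t, d)`.

Each cut is an end point of two pieces, which costs a factor `2` in the sum of the `1 / |f'|`.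
-/

section Calculus

lemma icc_induction_of_finite_cuts {α : Type*} [LinearOrder α] {p : α → α → Prop} {K : Set α}
    (hK : K.Finite) {a b : α} (hab : a < b)
    (piece : ∀ c d, a ≤ c → c < d → d ≤ b → Disjoint K (Ioo c d) → p c d)
    (glue : ∀ c d, ∀ z ∈ K, a ≤ c → c < z → z < d → d ≤ b → p c z → p z d → p c d) :
    p a b := by
  induction K, hK using Set.Finite.induction_on generalizing a b with
  | empty => exact piece a b le_rfl hab le_rfl (empty_disjoint _)
  | @insert w K _ _ ih =>
    by_cases hw : w ∈ Ioo a b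
    · refine glue a b w (mem_insert w K) le_rfl hw.1 hw.2 le_rfl (ih hw.1 ?_ ?_) (ih hw.2 ?_ ?_)
      · exact fun c d hac hcd hdw hd => piece c d hac hcd (hdw.trans hw.2.le)
          (disjoint_insert_left.2 ⟨fun h => h.2.not_ge hdw, hd⟩)
      · exact fun c d z hz hac hcz hzd hdw =>
          glue c d z (mem_insert_of_mem w hz) hac hcz hzd (hdw.trans hw.2.le)
      · exact fun c d hwc hcd hdb hd => piece c d (hw.1.le.trans hwc) hcd hdb
          (disjoint_insert_left.2 ⟨fun h => h.1.not_ge hwc, hd⟩)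
      · exact fun c d z hz hwc hcz hzd hdb =>
          glue c d z (mem_insert_of_mem w hz) (hw.1.le.trans hwc) hcz hzd hdb
    · refine ih hab (fun c d hac hcd hdb hd => piece c d hac hcd hdb
        (disjoint_insert_left.2 ⟨fun h => hw (Ioo_subset_Ioo hac hdb h), hd⟩)) ?_
      exact fun c d z hz => glue c d z (mem_insert_of_mem w hz)

variable {g g' : ℝ → ℝ} {a b : ℝ}

lemma strictMonoOn_or_strictAntiOn_of_hasDerivAt_ne_zero (hg : ContinuousOn g (Icc a b))
    (hg' : ∀ t ∈ Ioo a b, HasDerivAt g (g' t) t) (hne : ∀ t ∈ Ioo a b, g' t ≠ 0) :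
    StrictMonoOn g (Icc a b) ∨ StrictAntiOn g (Icc a b) := by
  have hderiv : ∀ t ∈ interior (Icc a b), deriv g t = g' t := by
    rw [interior_Icc]
    exact fun t ht => (hg' t ht).deriv
  rcases hasDerivWithinAt_forall_lt_or_forall_gt_of_forall_ne (convex_Ioo a b)
    (fun t ht => (hg' t ht).hasDerivWithinAt) hne with hneg | hpos
  · refine .inr (strictAntiOn_of_deriv_neg (convex_Icc a b) hg fun t ht => ?_)
    rw [hderiv t ht]
    exact hneg t (by rwa [interior_Icc] at ht)
  · refine .inl (strictMonoOn_of_deriv_pos (convex_Icc a b) hg fun t ht => ?_)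
    rw [hderiv t ht]
    exact hpos t (by rwa [interior_Icc] at ht)

lemma finite_zeros_of_finite_zeros_hasDerivAt (hg : ContinuousOn g (Icc a b))
    (hg' : ∀ t ∈ Ioo a b, HasDerivAt g (g' t) t) (hfin : {t ∈ Ioo a b | g' t = 0}.Finite) :
    {t ∈ Icc a b | g t = 0}.Finite := by
  rcases lt_or_ge a b with hab | hba
  · refine icc_induction_of_finite_cuts (p := fun c d => {t ∈ Icc c d | g t = 0}.Finite) hfin hab
      (fun c d hac _ hdb hdisj => ?_) fun c d z _ _ _ _ _ hcz hzd => (hcz.union hzd).subset ?_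
    · have hsub : Ioo c d ⊆ Ioo a b := Ioo_subset_Ioo hac hdb
      have hinj : InjOn g (Icc c d) :=
        (strictMonoOn_or_strictAntiOn_of_hasDerivAt_ne_zero (hg.mono (Icc_subset_Icc hac hdb))
          (fun t ht => hg' t (hsub ht))
          fun t ht h0 => disjoint_left.1 hdisj ⟨hsub ht, h0⟩ ht).elim
          StrictMonoOn.injOn StrictAntiOn.injOn
      exact Set.Subsingleton.finite fun s hs t ht => hinj hs.1 ht.1 (hs.2.trans ht.2.symm)
    · rintro t ⟨ht, h0⟩
      exact (le_total t z).imp (fun h => ⟨⟨ht.1, h⟩, h0⟩) fun h => ⟨⟨h, ht.2⟩, h0⟩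
  · exact ((subsingleton_Icc_of_ge hba).finite).subset (sep_subset _ _)

lemma integral_deriv_div_sq (hab : a ≤ b) (hg : ContinuousOn g (Icc a b))
    (hg' : ∀ t ∈ Ioo a b, HasDerivAt g (g' t) t) (hint : IntervalIntegrable g' volume a b)
    (hne : ∀ t ∈ Icc a b, g t ≠ 0) : ∫ t in a..b, g' t / g t ^ 2 = 1 / g a - 1 / g b := by
  have hcont : ContinuousOn (fun t => (g t ^ 2)⁻¹) (uIcc a b) := by
    rw [uIcc_of_le hab]
    exact (hg.pow 2).inv₀ fun t ht => pow_ne_zero 2 (hne t ht)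
  have hFTC := intervalIntegral.integral_eq_sub_of_hasDerivAt_of_le hab
    (f := fun t => -(g t)⁻¹) (f' := fun t => g' t / g t ^ 2) (hg.inv₀ hne).neg
    (fun t ht => by
      simpa [neg_div] using ((hg' t ht).fun_inv (hne t (Ioo_subset_Icc_self ht))).fun_neg)
    (by simpa only [div_eq_mul_inv] using hint.mul_continuousOn hcont)
  rw [hFTC]
  ring

variable {E : Type*} [NormedAddCommGroup E] [NormedSpace ℂ E] [CompleteSpace E]

lemma norm_integral_deriv_smul_le_s2 {F F' : ℝ → ℂ} {φ φ' : ℝ → E} {M : ℝ} (hab : a ≤ b)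
    (hF : ContinuousOn F (Icc a b)) (hF' : ∀ t ∈ Ioo a b, HasDerivAt F (F' t) t)
    (hFint : IntervalIntegrable F' volume a b) (hM : ∀ t ∈ Icc a b, ‖F t‖ ≤ M)
    (hφ : ContinuousOn φ (Icc a b)) (hφ' : ∀ t ∈ Ioo a b, HasDerivAt φ (φ' t) t)
    (hφint : IntervalIntegrable φ' volume a b) :
    ‖∫ t in a..b, F' t • φ t‖ ≤
      ‖F b‖ * ‖φ b‖ + ‖F a‖ * ‖φ a‖ + M * ∫ t in a..b, ‖φ' t‖ := by
  have hparts : ∫ t in a..b, F' t • φ t =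
      F b • φ b - F a • φ a - ∫ t in a..b, F t • φ' t := by
    have h := intervalIntegral.integral_smul_deriv_eq_deriv_smul_of_hasDerivAt
      (by rwa [uIcc_of_le hab]) (by rwa [uIcc_of_le hab])
      (by rwa [min_eq_left hab, max_eq_right hab]) (by rwa [min_eq_left hab, max_eq_right hab])
      hFint hφint
    rw [h, sub_sub_cancel]
  have hrest : ‖∫ t in a..b, F t • φ' t‖ ≤ M * ∫ t in a..b, ‖φ' t‖ := by
    rw [← intervalIntegral.integral_const_mul]
    refine intervalIntegral.norm_integral_le_of_norm_le hab (.of_forall fun t ht => ?_)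
      (hφint.norm.const_mul M)
    rw [norm_smul]
    exact mul_le_mul_of_nonneg_right (hM t (Ioc_subset_Icc_self ht)) (norm_nonneg _)
  calc ‖∫ t in a..b, F' t • φ t‖
      ≤ ‖F b • φ b‖ + ‖F a • φ a‖ + ‖∫ t in a..b, F t • φ' t‖ := by
        rw [hparts]
        exact (norm_sub_le _ _).trans (add_le_add_left (norm_sub_le _ _) _)
    _ ≤ ‖F b‖ * ‖φ b‖ + ‖F a‖ * ‖φ a‖ + M * ∫ t in a..b, ‖φ' t‖ := by
        rw [norm_smul, norm_smul]
        exact add_le_add_right hrest _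

lemma norm_integral_smul_le_of_norm_primitive_le {k : ℝ → ℂ} {φ φ' : ℝ → E} {M : ℝ} (hab : a ≤ b)
    (hk : ContinuousOn k (Icc a b)) (hM : ∀ x ∈ Icc a b, ‖∫ t in a..x, k t‖ ≤ M)
    (hφ : ContinuousOn φ (Icc a b)) (hφ' : ∀ t ∈ Ioo a b, HasDerivAt φ (φ' t) t)
    (hφint : IntervalIntegrable φ' volume a b) :
    ‖∫ t in a..b, k t • φ t‖ ≤
      M * (sSup ((fun t => ‖φ t‖) '' Icc a b) + ∫ t in a..b, ‖φ' t‖) := by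
  have hkint : IntervalIntegrable k volume a b := hk.intervalIntegrable_of_Icc hab
  have hF : ContinuousOn (fun x => ∫ t in a..x, k t) (Icc a b) := by
    simpa only [uIcc_of_le hab] using
      intervalIntegral.continuousOn_primitive_interval' hkint left_mem_uIcc
  have hF' : ∀ x ∈ Ioo a b, HasDerivAt (fun x => ∫ t in a..x, k t) (k x) x := fun x hx =>
    have hnhds : Icc a b ∈ nhds x := Icc_mem_nhds hx.1 hx.2
    intervalIntegral.integral_hasDerivAt_right
      ((hk.mono (Icc_subset_Icc le_rfl hx.2.le)).intervalIntegrable_of_Icc hx.1.le)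
      ⟨Icc a b, hnhds, hk.aestronglyMeasurable measurableSet_Icc⟩ (hk.continuousAt hnhds)
  have hb : b ∈ Icc a b := right_mem_Icc.2 hab
  have hsup : ‖φ b‖ ≤ sSup ((fun t => ‖φ t‖) '' Icc a b) :=
    le_csSup (isCompact_Icc.image_of_continuousOn hφ.norm).bddAbove (mem_image_of_mem _ hb)
  calc ‖∫ t in a..b, k t • φ t‖
      ≤ ‖∫ t in a..b, k t‖ * ‖φ b‖ + ‖∫ t in a..a, k t‖ * ‖φ a‖ + M * ∫ t in a..b, ‖φ' t‖ :=
        norm_integral_deriv_smul_le_s2 hab hF hF' hkint hM hφ hφ' hφint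
    _ = ‖∫ t in a..b, k t‖ * ‖φ b‖ + M * ∫ t in a..b, ‖φ' t‖ := by simp
    _ ≤ M * sSup ((fun t => ‖φ t‖) '' Icc a b) + M * ∫ t in a..b, ‖φ' t‖ := by
        gcongr
        · exact (norm_nonneg _).trans (hM b hb)
        · exact hM b hb
    _ = M * (sSup ((fun t => ‖φ t‖) '' Icc a b) + ∫ t in a..b, ‖φ' t‖) := (mul_add _ _ _).symm

end Calculus

/-- The oscillating kernel `e^{i f}` of the phase function `f`. -/
noncomputable def osc (f : ℝ → ℝ) (x : ℝ) : ℂ := Complex.exp (Complex.I * (f x : ℂ))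

section Oscillation

variable {f : ℝ → ℝ}

lemma norm_osc (f : ℝ → ℝ) (x : ℝ) : ‖osc f x‖ = 1 := by
  rw [osc, mul_comm, Complex.norm_exp_ofReal_mul_I]

lemma continuousOn_osc {s : Set ℝ} (hf : ContinuousOn f s) : ContinuousOn (osc f) s :=
  (continuousOn_const.mul (Complex.continuous_ofReal.comp_continuousOn hf)).cexp

lemma hasDerivAt_osc {m t : ℝ} (hf : HasDerivAt f m t) :
    HasDerivAt (osc f) (osc f t * (Complex.I * (m : ℂ))) t :=
  (hf.ofReal_comp.const_mul Complex.I).cexp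

lemma norm_integral_osc_neg (f : ℝ → ℝ) (x y : ℝ) :
    ‖∫ t in x..y, osc (fun s => -f s) t‖ = ‖∫ t in x..y, osc f t‖ := by
  have hconj : ∀ t, osc (fun s => -f s) t = (starRingEnd ℂ) (osc f t) := fun t => by
    simp [osc, ← Complex.exp_conj]
  have hint : ∫ t in x..y, (starRingEnd ℂ) (osc f t) = (starRingEnd ℂ) (∫ t in x..y, osc f t) := by
    simp only [intervalIntegral, integral_conj, map_sub]
  rw [funext hconj, hint, RCLike.norm_conj]

/-- `M` bounds the integrals of `e^{i f}` over all subintervals of `[c, d]`, not only over `[c, d]`: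
removing an amplitude takes the bound over every initial segment. -/
def OscBound (f : ℝ → ℝ) (c d M : ℝ) : Prop :=
  ∀ ⦃x y : ℝ⦄, c ≤ x → x ≤ y → y ≤ d → ‖∫ t in x..y, osc f t‖ ≤ M

namespace OscBound

variable {c d z M N : ℝ}

lemma length (f : ℝ → ℝ) (c d : ℝ) : OscBound f c d (d - c) := by
  intro x y hcx hxy hyd
  have h := intervalIntegral.norm_integral_le_of_norm_le_const (a := x) (b := y)
    fun t _ => (norm_osc f t).le
  rw [one_mul, abs_of_nonneg (sub_nonneg.2 hxy)] at h
  linarith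

lemma mono (h : OscBound f c d M) (hMN : M ≤ N) : OscBound f c d N :=
  fun _ _ hcx hxy hyd => (h hcx hxy hyd).trans hMN

lemma nonneg (h : OscBound f c d M) (hcd : c ≤ d) : 0 ≤ M :=
  (norm_nonneg _).trans (h le_rfl hcd le_rfl)

lemma add (h₁ : OscBound f c z M) (hf : ContinuousOn f (Icc c d)) (hcz : c ≤ z) (hzd : z ≤ d)
    (h₂ : OscBound f z d N) : OscBound f c d (M + N) := by
  intro x y hcx hxy hyd
  have hM := h₁.nonneg hcz
  have hN := h₂.nonneg hzd
  rcases le_total y z with hyz | hzy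
  · linarith [h₁ hcx hxy hyz]
  rcases le_total z x with hzx | hxz
  · linarith [h₂ hzx hxy hyd]
  have hosc := continuousOn_osc hf
  rw [← intervalIntegral.integral_add_adjacent_intervals
    ((hosc.mono (Icc_subset_Icc hcx hzd)).intervalIntegrable_of_Icc hxz)
    ((hosc.mono (Icc_subset_Icc hcz hyd)).intervalIntegrable_of_Icc hzy)]
  exact (norm_add_le _ _).trans (add_le_add (h₁ hcx hxz le_rfl) (h₂ le_rfl hzy hyd))

lemma of_neg (h : OscBound (fun t => -f t) c d M) : OscBound f c d M :=
  fun x y hcx hxy hyd => norm_integral_osc_neg f x y ▸ h hcx hxy hyd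

lemma of_reflect (h : OscBound (fun t => f (-t)) (-d) (-c) M) : OscBound f c d M := by
  intro x y hcx hxy hyd
  have hint : ∫ t in -y..-x, osc (fun s => f (-s)) t = ∫ t in x..y, osc f t :=
    (intervalIntegral.integral_comp_neg (osc f)).trans (by rw [neg_neg, neg_neg])
  exact hint ▸ h (neg_le_neg hyd) (neg_le_neg hxy) (neg_le_neg hcx)

end OscBound

end Oscillation

/-- The density `min(1, |f''| / f'²)`, whose integral measures how much of an interval the
phase spends near a stationary point. Its value is `1` at the zeros of `f'`, where the convention
`x / 0 = 0` would give `0`. -/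
noncomputable def phaseDensity (f' f'' : ℝ → ℝ) (x : ℝ) : ℝ :=
  if f' x = 0 then 1 else min 1 (|f'' x| / f' x ^ 2)

section PhaseDensity

variable {f' f'' : ℝ → ℝ}

lemma phaseDensity_nonneg (f' f'' : ℝ → ℝ) (x : ℝ) : 0 ≤ phaseDensity f' f'' x := by
  unfold phaseDensity
  split_ifs <;> positivity

lemma phaseDensity_le_one (f' f'' : ℝ → ℝ) (x : ℝ) : phaseDensity f' f'' x ≤ 1 := by
  unfold phaseDensity
  split_ifs
  · exact le_rfl
  · exact min_le_left _ _

lemma phaseDensity_eq_one {x : ℝ} (h : f' x ^ 2 ≤ |f'' x|) : phaseDensity f' f'' x = 1 := by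
  unfold phaseDensity
  split_ifs with h0
  · rfl
  · exact min_eq_left ((one_le_div (by positivity)).2 h)

lemma phaseDensity_eq_div {x : ℝ} (h0 : f' x ≠ 0) (h : |f'' x| ≤ f' x ^ 2) :
    phaseDensity f' f'' x = |f'' x| / f' x ^ 2 := by
  rw [phaseDensity, if_neg h0, min_eq_right ((div_le_one (by positivity)).2 h)]

lemma phaseDensity_neg (f' f'' : ℝ → ℝ) (x : ℝ) :
    phaseDensity (fun t => -f' t) (fun t => -f'' t) x = phaseDensity f' f'' x := by
  simp only [phaseDensity, neg_eq_zero, abs_neg, neg_sq]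

lemma phaseDensity_reflect (f' f'' : ℝ → ℝ) (x : ℝ) :
    phaseDensity (fun t => -f' (-t)) (fun t => f'' (-t)) x = phaseDensity f' f'' (-x) := by
  simp only [phaseDensity, neg_eq_zero, neg_sq]

lemma integral_phaseDensity_nonneg {c d : ℝ} (hcd : c ≤ d) :
    0 ≤ ∫ t in c..d, phaseDensity f' f'' t :=
  intervalIntegral.integral_nonneg hcd fun t _ => phaseDensity_nonneg f' f'' t

lemma integral_phaseDensity_eq_length {c d : ℝ} (hcd : c ≤ d)
    (h : ∀ t ∈ Ioo c d, f' t ^ 2 ≤ |f'' t|) : ∫ t in c..d, phaseDensity f' f'' t = d - c := by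
  rw [intervalIntegral.integral_congr_Ioo_of_le hcd fun t ht => phaseDensity_eq_one (h t ht)]
  simp

lemma intervalIntegrable_phaseDensity {c d : ℝ} (hcd : c ≤ d) (hf' : ContinuousOn f' (Icc c d))
    (hf'' : ContinuousOn f'' (Icc c d)) :
    IntervalIntegrable (phaseDensity f' f'') volume c d := by
  have hmeas : Measurable fun p : ℝ × ℝ => if p.1 = 0 then 1 else min 1 (|p.2| / p.1 ^ 2) :=
    Measurable.ite (measurable_fst (measurableSet_singleton 0)) measurable_const (by fun_prop)
  have hdens : AEStronglyMeasurable (phaseDensity f' f'') (volume.restrict (Icc c d)) :=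
    (hmeas.comp_aemeasurable ((hf'.aemeasurable measurableSet_Icc).prodMk
      (hf''.aemeasurable measurableSet_Icc))).aestronglyMeasurable
  have hIcc : IntegrableOn (phaseDensity f' f'') (Icc c d) :=
    Integrable.of_bound hdens 1 <| .of_forall fun t =>
      (Real.norm_of_nonneg (phaseDensity_nonneg f' f'' t)).trans_le (phaseDensity_le_one f' f'' t)
  exact (intervalIntegrable_iff_integrableOn_Icc_of_le hcd).2 hIcc

lemma integral_phaseDensity_add {c z d : ℝ} (hf' : ContinuousOn f' (Icc c d))
    (hf'' : ContinuousOn f'' (Icc c d)) (hcz : c ≤ z) (hzd : z ≤ d) :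
    (∫ t in c..z, phaseDensity f' f'' t) + ∫ t in z..d, phaseDensity f' f'' t =
      ∫ t in c..d, phaseDensity f' f'' t :=
  have hleft : Icc c z ⊆ Icc c d := Icc_subset_Icc_right hzd
  have hright : Icc z d ⊆ Icc c d := Icc_subset_Icc_left hcz
  intervalIntegral.integral_add_adjacent_intervals
    (intervalIntegrable_phaseDensity hcz (hf'.mono hleft) (hf''.mono hleft))
    (intervalIntegrable_phaseDensity hzd (hf'.mono hright) (hf''.mono hright))

lemma sub_le_integral_phaseDensity {c t d : ℝ} (hf' : ContinuousOn f' (Icc c d))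
    (hf'' : ContinuousOn f'' (Icc c d)) (ht : t ∈ Icc c d)
    (h : ∀ s ∈ Ioo c t, f' s ^ 2 ≤ |f'' s|) : t - c ≤ ∫ s in c..d, phaseDensity f' f'' s := by
  rw [← integral_phaseDensity_add hf' hf'' ht.1 ht.2, integral_phaseDensity_eq_length ht.1 h]
  exact le_add_of_nonneg_right (integral_phaseDensity_nonneg ht.2)

end PhaseDensity

/-- A `C²` phase function on `[c, d]`, with its first two derivatives given as functions: `f`, `f'`
and `f''` are continuous on `[c, d]`, and the derivatives are only required at interior points. -/
structure IsPhase (f f' f'' : ℝ → ℝ) (c d : ℝ) : Prop where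
  continuousOn : ContinuousOn f (Icc c d)
  continuousOn_deriv : ContinuousOn f' (Icc c d)
  continuousOn_deriv₂ : ContinuousOn f'' (Icc c d)
  hasDerivAt : ∀ t ∈ Ioo c d, HasDerivAt f (f' t) t
  hasDerivAt_deriv : ∀ t ∈ Ioo c d, HasDerivAt f' (f'' t) t

namespace IsPhase

variable {f f' f'' : ℝ → ℝ} {c d : ℝ}

lemma mono {x y : ℝ} (P : IsPhase f f' f'' c d) (hcx : c ≤ x) (hyd : y ≤ d) :
    IsPhase f f' f'' x y where
  continuousOn := P.continuousOn.mono (Icc_subset_Icc hcx hyd)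
  continuousOn_deriv := P.continuousOn_deriv.mono (Icc_subset_Icc hcx hyd)
  continuousOn_deriv₂ := P.continuousOn_deriv₂.mono (Icc_subset_Icc hcx hyd)
  hasDerivAt t ht := P.hasDerivAt t (Ioo_subset_Ioo hcx hyd ht)
  hasDerivAt_deriv t ht := P.hasDerivAt_deriv t (Ioo_subset_Ioo hcx hyd ht)

lemma neg (P : IsPhase f f' f'' c d) :
    IsPhase (fun t => -f t) (fun t => -f' t) (fun t => -f'' t) c d where
  continuousOn := P.continuousOn.neg
  continuousOn_deriv := P.continuousOn_deriv.neg
  continuousOn_deriv₂ := P.continuousOn_deriv₂.neg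
  hasDerivAt t ht := (P.hasDerivAt t ht).fun_neg
  hasDerivAt_deriv t ht := (P.hasDerivAt_deriv t ht).fun_neg

lemma reflect (P : IsPhase f f' f'' c d) :
    IsPhase (fun t => f (-t)) (fun t => -f' (-t)) (fun t => f'' (-t)) (-d) (-c) := by
  have hIcc : MapsTo Neg.neg (Icc (-d) (-c)) (Icc c d) := fun t ht =>
    ⟨le_neg_of_le_neg ht.2, neg_le_of_neg_le ht.1⟩
  have hIoo : MapsTo Neg.neg (Ioo (-d) (-c)) (Ioo c d) := fun t ht =>
    ⟨lt_neg_of_lt_neg ht.2, neg_lt_of_neg_lt ht.1⟩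
  have hderiv : ∀ {g : ℝ → ℝ} {m t : ℝ}, HasDerivAt g m (-t) →
      HasDerivAt (fun s => g (-s)) (-m) t := fun {g m t} h => by
    simpa [Function.comp_def] using HasDerivAt.scomp t h (hasDerivAt_neg t)
  exact
    { continuousOn := P.continuousOn.comp continuousOn_neg hIcc
      continuousOn_deriv := (P.continuousOn_deriv.comp continuousOn_neg hIcc).neg
      continuousOn_deriv₂ := P.continuousOn_deriv₂.comp continuousOn_neg hIcc
      hasDerivAt := fun t ht => hderiv (P.hasDerivAt (-t) (hIoo ht))
      hasDerivAt_deriv := fun t ht => by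
        simpa using (hderiv (P.hasDerivAt_deriv (-t) (hIoo ht))).fun_neg }

lemma monotoneOn_deriv (P : IsPhase f f' f'' c d) (hf'' : ∀ t ∈ Ioo c d, 0 ≤ f'' t) :
    MonotoneOn f' (Icc c d) := by
  refine monotoneOn_of_hasDerivWithinAt_nonneg (f' := f'') (convex_Icc c d) P.continuousOn_deriv
    ?_ ?_ <;> rw [interior_Icc]
  · exact fun t ht => (P.hasDerivAt_deriv t ht).hasDerivWithinAt
  · exact hf''

lemma norm_integral_osc_le_of_deriv_ne_zero (P : IsPhase f f' f'' c d) (hcd : c ≤ d)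
    (hne : ∀ t ∈ Icc c d, f' t ≠ 0) :
    ‖∫ t in c..d, osc f t‖ ≤ 1 / |f' d| + 1 / |f' c| + ∫ t in c..d, |f'' t| / f' t ^ 2 := by
  have hosc := continuousOn_osc P.continuousOn
  have hcancel : ‖∫ t in c..d, (osc f t * (Complex.I * (f' t : ℂ))) • (((f' t)⁻¹ : ℝ) : ℂ)‖ =
      ‖∫ t in c..d, osc f t‖ := by
    rw [← one_mul ‖∫ t in c..d, osc f t‖, ← Complex.norm_I, ← norm_mul,
      ← intervalIntegral.integral_const_mul]
    refine congrArg norm (intervalIntegral.integral_congr fun t ht => ?_)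
    rw [uIcc_of_le hcd] at ht
    have h0 : (f' t : ℂ) ≠ 0 := Complex.ofReal_ne_zero.2 (hne t ht)
    simp only [smul_eq_mul, Complex.ofReal_inv]
    field_simp
  have hparts := norm_integral_deriv_smul_le_s2 (M := 1) (φ := fun t => (((f' t)⁻¹ : ℝ) : ℂ))
    (φ' := fun t => ((-f'' t / f' t ^ 2 : ℝ) : ℂ)) hcd hosc
    (fun t ht => hasDerivAt_osc (P.hasDerivAt t ht))
    (ContinuousOn.intervalIntegrable_of_Icc hcd <| hosc.mul <| continuousOn_const.mul <|
      Complex.continuous_ofReal.comp_continuousOn P.continuousOn_deriv)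
    (fun t _ => (norm_osc f t).le)
    (Complex.continuous_ofReal.comp_continuousOn (P.continuousOn_deriv.inv₀ hne))
    (fun t ht => ((P.hasDerivAt_deriv t ht).fun_inv (hne t (Ioo_subset_Icc_self ht))).ofReal_comp)
    (ContinuousOn.intervalIntegrable_of_Icc hcd <| Complex.continuous_ofReal.comp_continuousOn <|
      P.continuousOn_deriv₂.neg.div (P.continuousOn_deriv.pow 2) fun t ht =>
        pow_ne_zero 2 (hne t ht))
  simpa only [hcancel, norm_osc, Complex.norm_real, norm_div, norm_neg, norm_inv, norm_pow,
    Real.norm_eq_abs, sq_abs, one_mul, one_div] using hparts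

lemma norm_integral_osc_le_two_div_deriv (P : IsPhase f f' f'' c d) (hcd : c ≤ d)
    (hc : 0 < f' c) (hf'' : ∀ t ∈ Ioo c d, 0 ≤ f'' t) : ‖∫ t in c..d, osc f t‖ ≤ 2 / f' c := by
  have hpos : ∀ t ∈ Icc c d, 0 < f' t := fun t ht =>
    hc.trans_le (P.monotoneOn_deriv hf'' (left_mem_Icc.2 hcd) ht ht.1)
  have hne : ∀ t ∈ Icc c d, f' t ≠ 0 := fun t ht => (hpos t ht).ne'
  have hvar : ∫ t in c..d, |f'' t| / f' t ^ 2 = 1 / f' c - 1 / f' d := by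
    rw [← integral_deriv_div_sq hcd P.continuousOn_deriv P.hasDerivAt_deriv
      (P.continuousOn_deriv₂.intervalIntegrable_of_Icc hcd) hne]
    exact intervalIntegral.integral_congr_Ioo_of_le hcd fun t ht => by
      rw [abs_of_nonneg (hf'' t ht)]
  calc ‖∫ t in c..d, osc f t‖
      ≤ 1 / |f' d| + 1 / |f' c| + ∫ t in c..d, |f'' t| / f' t ^ 2 :=
        P.norm_integral_osc_le_of_deriv_ne_zero hcd hne
    _ = 2 / f' c := by
        rw [hvar, abs_of_pos hc, abs_of_pos (hpos d (right_mem_Icc.2 hcd))]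
        ring

lemma oscBound_two_div_deriv (P : IsPhase f f' f'' c d) (hc : 0 < f' c)
    (hf'' : ∀ t ∈ Ioo c d, 0 ≤ f'' t) : OscBound f c d (2 / f' c) := by
  intro x y hcx hxy hyd
  have hx : f' c ≤ f' x := P.monotoneOn_deriv hf''
    (left_mem_Icc.2 (hcx.trans (hxy.trans hyd))) ⟨hcx, hxy.trans hyd⟩ hcx
  exact ((P.mono hcx hyd).norm_integral_osc_le_two_div_deriv hxy (hc.trans_le hx)
    fun t ht => hf'' t (Ioo_subset_Ioo hcx hyd ht)).trans
      (div_le_div_of_nonneg_left zero_le_two hc hx)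

lemma deriv_pos (P : IsPhase f f' f'' c d) (hc : 0 ≤ f' c) (hf'' : ∀ t ∈ Ioo c d, 0 < f'' t) :
    ∀ t ∈ Ioc c d, 0 < f' t := by
  have hmono : StrictMonoOn f' (Icc c d) := by
    refine strictMonoOn_of_hasDerivWithinAt_pos (f' := f'') (convex_Icc c d) P.continuousOn_deriv
      ?_ ?_ <;> rw [interior_Icc]
    · exact fun t ht => (P.hasDerivAt_deriv t ht).hasDerivWithinAt
    · exact hf''
  exact fun t ht => hc.trans_lt
    (hmono (left_mem_Icc.2 (ht.1.le.trans ht.2)) (Ioc_subset_Icc_self ht) ht.1)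

lemma sq_deriv_le_abs_deriv₂ (P : IsPhase f f' f'' c d) (hcd : c < d) (hc : f' c = 0)
    (hmono : MonotoneOn f'' (Icc c d)) (hd : 0 ≤ f' d) (hle : (d - c) * f' d ≤ 1) :
    f' d ^ 2 ≤ |f'' d| := by
  obtain ⟨x, hx, hslope⟩ := exists_hasDerivAt_eq_slope f' f'' hcd P.continuousOn_deriv
    P.hasDerivAt_deriv
  rw [hc, sub_zero, eq_div_iff (sub_pos.2 hcd).ne'] at hslope
  have hxd : f'' x ≤ |f'' d| :=
    (hmono (Ioo_subset_Icc_self hx) (right_mem_Icc.2 hcd.le) hx.2.le).trans (le_abs_self _)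
  calc f' d ^ 2 = f' d * (f'' x * (d - c)) := by rw [hslope, sq]
    _ ≤ f' d * (|f'' d| * (d - c)) := by gcongr
    _ = |f'' d| * ((d - c) * f' d) := by ring
    _ ≤ |f'' d| := mul_le_of_le_one_right (abs_nonneg _) hle

lemma exists_split_of_monotoneOn_deriv₂ (P : IsPhase f f' f'' c d) (hcd : c < d) (hc : f' c = 0)
    (hf'' : ∀ t ∈ Ioo c d, 0 < f'' t) (hmono : MonotoneOn f'' (Icc c d)) :
    ∃ t ∈ Ioc c d, t - c ≤ ∫ s in c..d, phaseDensity f' f'' s ∧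
      1 / f' t ≤ (∫ s in c..d, phaseDensity f' f'' s) + 1 / f' d := by
  have hpos := P.deriv_pos hc.ge hf''
  have hlen : ∀ t ∈ Ioc c d, (t - c) * f' t ≤ 1 →
      t - c ≤ ∫ s in c..d, phaseDensity f' f'' s := by
    refine fun t ht h1 => sub_le_integral_phaseDensity P.continuousOn_deriv P.continuousOn_deriv₂
      (Ioc_subset_Icc_self ht) fun s hs => ?_
    have hsd : s ≤ d := hs.2.le.trans ht.2
    have hst : f' s ≤ f' t := P.monotoneOn_deriv (fun x hx => (hf'' x hx).le) ⟨hs.1.le, hsd⟩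
      (Ioc_subset_Icc_self ht) hs.2.le
    have hs0 := (hpos s ⟨hs.1, hsd⟩).le
    refine (P.mono le_rfl hsd).sq_deriv_le_abs_deriv₂ hs.1 hc
      (hmono.mono (Icc_subset_Icc_right hsd)) hs0 (le_trans ?_ h1)
    exact mul_le_mul (sub_le_sub_right hs.2.le c) hst hs0 (sub_pos.2 ht.1).le
  have hd := right_mem_Ioc.2 hcd
  rcases le_total ((d - c) * f' d) 1 with hle | hge
  · exact ⟨d, hd, hlen d hd hle, le_add_of_nonneg_left (integral_phaseDensity_nonneg hcd.le)⟩
  · obtain ⟨t, ht, ht1 : (t - c) * f' t = 1⟩ := intermediate_value_Icc hcd.le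
      (((continuous_id.sub continuous_const).continuousOn).mul P.continuousOn_deriv)
      (show (1 : ℝ) ∈ Icc ((c - c) * f' c) ((d - c) * f' d) by simpa [hc] using hge)
    have htc : t ∈ Ioc c d := ⟨ht.1.lt_of_ne fun h => by simp [← h] at ht1, ht.2⟩
    refine ⟨t, htc, hlen t htc ht1.le, ?_⟩
    rw [← eq_one_div_of_mul_eq_one_left ht1]
    exact le_add_of_le_of_nonneg (hlen t htc ht1.le) (one_div_pos.2 (hpos d hd)).le

lemma one_div_deriv_sub_le_integral_phaseDensity (P : IsPhase f f' f'' c d) (hcd : c ≤ d)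
    (hpos : ∀ t ∈ Icc c d, 0 < f' t) (hf'' : ∀ t ∈ Ioo c d, |f'' t| ≤ f' t ^ 2) :
    1 / f' c - 1 / f' d ≤ ∫ t in c..d, phaseDensity f' f'' t := by
  have hne : ∀ t ∈ Icc c d, f' t ≠ 0 := fun t ht => (hpos t ht).ne'
  have hint := P.continuousOn_deriv₂.intervalIntegrable_of_Icc (μ := volume) hcd
  rw [← integral_deriv_div_sq hcd P.continuousOn_deriv P.hasDerivAt_deriv hint hne]
  refine intervalIntegral.integral_mono_on_of_le_Ioo hcd ?_
    (intervalIntegrable_phaseDensity hcd P.continuousOn_deriv P.continuousOn_deriv₂) fun t ht => ?_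
  · exact (P.continuousOn_deriv₂.div (P.continuousOn_deriv.pow 2) fun t ht =>
      pow_ne_zero 2 (hne t ht)).intervalIntegrable_of_Icc hcd
  · rw [phaseDensity_eq_div (hne t (Ioo_subset_Icc_self ht)) (hf'' t ht)]
    gcongr
    exact le_abs_self _

lemma antitoneOn_deriv₂_sub_sq_deriv (P : IsPhase f f' f'' c d) (hc : 0 ≤ f' c)
    (hf'' : ∀ t ∈ Ioo c d, 0 ≤ f'' t) (hanti : AntitoneOn f'' (Icc c d)) :
    AntitoneOn (fun t => f'' t - f' t ^ 2) (Icc c d) := by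
  have hmono := P.monotoneOn_deriv hf''
  have hnonneg : ∀ t ∈ Icc c d, 0 ≤ f' t := fun t ht =>
    hc.trans (hmono (left_mem_Icc.2 (ht.1.trans ht.2)) ht ht.1)
  exact fun s hs t ht hst =>
    sub_le_sub (hanti hs ht hst) (pow_le_pow_left₀ (hnonneg s hs) (hmono hs ht hst) 2)

lemma exists_split_of_antitoneOn_deriv₂ (P : IsPhase f f' f'' c d) (hcd : c < d) (hc : f' c = 0)
    (hf'' : ∀ t ∈ Ioo c d, 0 < f'' t) (hanti : AntitoneOn f'' (Icc c d)) :
    ∃ t ∈ Ioc c d, t - c ≤ ∫ s in c..d, phaseDensity f' f'' s ∧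
      1 / f' t ≤ (∫ s in c..d, phaseDensity f' f'' s) + 1 / f' d := by
  have hpos := P.deriv_pos hc.ge hf''
  have hdiff := P.antitoneOn_deriv₂_sub_sq_deriv hc.ge (fun t ht => (hf'' t ht).le) hanti
  have hlen : ∀ t ∈ Icc c d, 0 ≤ f'' t - f' t ^ 2 →
      t - c ≤ ∫ s in c..d, phaseDensity f' f'' s := fun t ht h0 =>
    sub_le_integral_phaseDensity P.continuousOn_deriv P.continuousOn_deriv₂ ht fun s hs =>
      (sub_nonneg.1 <| h0.trans <|
        hdiff ⟨hs.1.le, hs.2.le.trans ht.2⟩ ht hs.2.le).trans (le_abs_self _)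
  have hd := right_mem_Icc.2 hcd.le
  rcases le_total 0 (f'' d - f' d ^ 2) with hle | hge
  · exact ⟨d, right_mem_Ioc.2 hcd, hlen d hd hle,
      le_add_of_nonneg_left (integral_phaseDensity_nonneg hcd.le)⟩
  · have hc'' : 0 < f'' c := by
      obtain ⟨m, hm⟩ := exists_between hcd
      exact (hf'' m hm).trans_le (hanti (left_mem_Icc.2 hcd.le) (Ioo_subset_Icc_self hm) hm.1.le)
    obtain ⟨t, ht, ht0 : f'' t - f' t ^ 2 = 0⟩ := intermediate_value_Icc' hcd.le
      (P.continuousOn_deriv₂.fun_sub (P.continuousOn_deriv.fun_pow 2))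
      (show (0 : ℝ) ∈ Icc (f'' d - f' d ^ 2) (f'' c - f' c ^ 2) from ⟨hge, by simp [hc, hc''.le]⟩)
    have htc : c < t := ht.1.lt_of_ne fun h => by simp [← h, hc, hc''.ne'] at ht0
    have hright := (P.mono ht.1 le_rfl).one_div_deriv_sub_le_integral_phaseDensity ht.2
      (fun s hs => hpos s ⟨htc.trans_le hs.1, hs.2⟩) fun s hs => by
        rw [abs_of_pos (hf'' s ⟨htc.trans hs.1, hs.2⟩)]
        exact sub_nonpos.1 (ht0 ▸ hdiff ht ⟨ht.1.trans hs.1.le, hs.2.le⟩ hs.1.le)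
    refine ⟨t, ⟨htc, ht.2⟩, hlen t ht ht0.ge, ?_⟩
    linarith [integral_phaseDensity_add P.continuousOn_deriv P.continuousOn_deriv₂ ht.1 ht.2,
      integral_phaseDensity_nonneg (f' := f') (f'' := f'') ht.1]

lemma oscBound_of_deriv_nonneg (P : IsPhase f f' f'' c d) (hcd : c < d) (hc : 0 ≤ f' c)
    (hf'' : ∀ t ∈ Ioo c d, 0 < f'' t)
    (hmono : MonotoneOn f'' (Icc c d) ∨ AntitoneOn f'' (Icc c d)) :
    OscBound f c d (3 * ((∫ t in c..d, phaseDensity f' f'' t) + (1 / |f' c| + 1 / |f' d|))) := by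
  have hpos := P.deriv_pos hc hf''
  have hD := integral_phaseDensity_nonneg (f' := f') (f'' := f'') hcd.le
  have hd := hpos d (right_mem_Ioc.2 hcd)
  have hwd : 0 < 1 / f' d := one_div_pos.2 hd
  rw [abs_of_nonneg hc, abs_of_pos hd]
  rcases hc.eq_or_lt with hc0 | hc
  · obtain ⟨t, ht, hlen, hinv⟩ := hmono.elim
      (P.exists_split_of_monotoneOn_deriv₂ hcd hc0.symm hf'')
      (P.exists_split_of_antitoneOn_deriv₂ hcd hc0.symm hf'')
    refine ((OscBound.length f c t).add P.continuousOn ht.1.le ht.2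
      ((P.mono ht.1.le le_rfl).oscBound_two_div_deriv (hpos t ht) fun s hs =>
        (hf'' s ⟨ht.1.trans hs.1, hs.2⟩).le)).mono ?_
    rw [← hc0, div_zero, div_eq_mul_one_div 2]
    linarith
  · refine (P.oscBound_two_div_deriv hc fun t ht => (hf'' t ht).le).mono ?_
    rw [div_eq_mul_one_div 2]
    linarith [one_div_pos.2 hc]

lemma oscBound_of_deriv₂_pos (P : IsPhase f f' f'' c d) (hcd : c < d)
    (hf' : ∀ t ∈ Ioo c d, f' t ≠ 0) (hf'' : ∀ t ∈ Ioo c d, 0 < f'' t)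
    (hmono : MonotoneOn f'' (Icc c d) ∨ AntitoneOn f'' (Icc c d)) :
    OscBound f c d (3 * ((∫ t in c..d, phaseDensity f' f'' t) + (1 / |f' c| + 1 / |f' d|))) := by
  rcases le_or_gt 0 (f' c) with hc | hc
  · exact P.oscBound_of_deriv_nonneg hcd hc hf'' hmono
  have hd : f' d ≤ 0 := by
    by_contra! hd
    obtain ⟨t, ht, h0⟩ := intermediate_value_Ioo hcd.le P.continuousOn_deriv ⟨hc, hd⟩
    exact hf' t ht h0
  have hIcc : ∀ t ∈ Icc (-d) (-c), -t ∈ Icc c d := fun t ht =>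
    ⟨le_neg_of_le_neg ht.2, neg_le_of_neg_le ht.1⟩
  have hreflect := P.reflect.oscBound_of_deriv_nonneg (neg_lt_neg hcd) (by simpa using hd)
    (fun t ht => hf'' (-t) ⟨lt_neg_of_lt_neg ht.2, neg_lt_of_neg_lt ht.1⟩)
    (hmono.symm.imp
      (fun h s hs t ht hst => h (hIcc t ht) (hIcc s hs) (neg_le_neg hst))
      (fun h s hs t ht hst => h (hIcc t ht) (hIcc s hs) (neg_le_neg hst)))
  refine hreflect.of_reflect.mono (le_of_eq ?_)
  simp only [phaseDensity_reflect, neg_neg, abs_neg, add_comm (1 / |f' d|),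
    intervalIntegral.integral_comp_neg fun t => phaseDensity f' f'' t]

lemma oscBound_of_ne_zero (P : IsPhase f f' f'' c d) (hcd : c < d)
    (hf' : ∀ t ∈ Ioo c d, f' t ≠ 0) (hf'' : ∀ t ∈ Ioo c d, f'' t ≠ 0)
    (hmono : MonotoneOn f'' (Icc c d) ∨ AntitoneOn f'' (Icc c d)) :
    OscBound f c d (3 * ((∫ t in c..d, phaseDensity f' f'' t) + (1 / |f' c| + 1 / |f' d|))) := by
  rcases hasDerivWithinAt_forall_lt_or_forall_gt_of_forall_ne (convex_Ioo c d)
    (fun t ht => (P.hasDerivAt_deriv t ht).hasDerivWithinAt) hf'' with hneg | hpos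
  · have h := P.neg.oscBound_of_deriv₂_pos hcd (fun t ht => neg_ne_zero.2 (hf' t ht))
      (fun t ht => neg_pos.2 (hneg t ht))
      (hmono.symm.imp (fun h => h.neg) fun h => h.neg)
    simpa only [phaseDensity_neg, abs_neg] using h.of_neg
  · exact P.oscBound_of_deriv₂_pos hcd hf' hpos hmono

end IsPhase

section Cuts

lemma finsum_mem_inter_Ioo_eq_add {α M : Type*} [LinearOrder α] [AddCommMonoid M] {K : Set α}
    (hK : K.Finite) (w : α → M) {c z d : α} (hz : z ∈ K) (hcz : c < z) (hzd : z < d) :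
    ∑ᶠ x ∈ K ∩ Ioo c d, w x =
      w z + (∑ᶠ x ∈ K ∩ Ioo c z, w x + ∑ᶠ x ∈ K ∩ Ioo z d, w x) := by
  have hsplit : K ∩ Ioo c d = insert z (K ∩ Ioo c z ∪ K ∩ Ioo z d) := by
    rw [← inter_union_distrib_left, ← inter_insert_of_mem hz, ← union_insert,
      Ioo_insert_left hzd, Ioo_union_Ico_eq_Ioo hcz hzd.le]
  have hz' : z ∉ K ∩ Ioo c z ∪ K ∩ Ioo z d := by simp
  have hdisj : Disjoint (K ∩ Ioo c z) (K ∩ Ioo z d) :=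
    disjoint_left.2 fun _ hx hx' => hx.2.2.not_gt hx'.2.1
  have hfin : ∀ s : Set α, (K ∩ s).Finite := fun s => hK.subset inter_subset_left
  rw [hsplit, finsum_mem_insert _ hz' ((hfin _).union (hfin _)),
    finsum_mem_union hdisj (hfin _) (hfin _)]

/-- The interior points of `[a, b]` that cut it into pieces on which none of `f'`, `f''` and `f'''`
changes sign. -/
def phaseCuts (f' f'' f''' : ℝ → ℝ) (a b : ℝ) : Set ℝ :=
  {x ∈ Ioo a b | f' x = 0 ∨ f'' x = 0 ∨ f''' x = 0}

/-- The set `J` of the boundary sum: the end points and the zeros of `f''` and `f'''`, without the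
stationary points of the phase, whose weights `1 / |f'|` would be infinite. -/
def nonstationaryCuts (f' f'' f''' : ℝ → ℝ) (a b : ℝ) : Set ℝ :=
  {x ∈ Icc a b | f' x ≠ 0 ∧ (x = a ∨ x = b ∨ f'' x = 0 ∨ f''' x = 0)}

variable {f' f'' f''' : ℝ → ℝ} {a b : ℝ}

lemma nonstationaryCuts_subset :
    nonstationaryCuts f' f'' f''' a b ⊆ insert a (insert b (phaseCuts f' f'' f''' a b)) := by
  rintro x ⟨hx, -, hcut⟩
  by_cases ha : x = a
  · exact .inl ha
  by_cases hb : x = b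
  · exact .inr (.inl hb)
  exact .inr (.inr ⟨⟨hx.1.lt_of_ne' ha, hx.2.lt_of_ne hb⟩,
    .inr ((hcut.resolve_left ha).resolve_left hb)⟩)

lemma finsum_nonstationaryCuts (hab : a < b) (hfin : (phaseCuts f' f'' f''' a b).Finite) :
    ∑ᶠ x ∈ nonstationaryCuts f' f'' f''' a b, 1 / |f' x| =
      1 / |f' a| + (1 / |f' b| + ∑ᶠ x ∈ phaseCuts f' f'' f''' a b, 1 / |f' x|) := by
  have hb : b ∉ phaseCuts f' f'' f''' a b := fun h => h.1.2.false
  have ha : a ∉ insert b (phaseCuts f' f'' f''' a b) := fun h =>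
    h.elim hab.ne fun h => h.1.1.false
  rw [← finsum_mem_insert (fun x => 1 / |f' x|) hb hfin,
    ← finsum_mem_insert (fun x => 1 / |f' x|) ha (hfin.insert b)]
  -- The zeros of `f'` have weight `1 / |0| = 0`.
  refine finsum_mem_inter_support_eq' _ _ _ fun x hx => ⟨fun h => nonstationaryCuts_subset h, ?_⟩
  have hx0 : f' x ≠ 0 := fun h0 => hx (by simp [h0])
  rintro (rfl | rfl | ⟨hxab, h0 | h0⟩)
  · exact ⟨left_mem_Icc.2 hab.le, hx0, .inl rfl⟩
  · exact ⟨right_mem_Icc.2 hab.le, hx0, .inr (.inl rfl)⟩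
  · exact absurd h0 hx0
  · exact ⟨Ioo_subset_Icc_self hxab, hx0, .inr (.inr h0)⟩

end Cuts

namespace IsPhase

variable {f f' f'' f''' : ℝ → ℝ} {a b : ℝ}

lemma finite_phaseCuts (P : IsPhase f f' f'' a b)
    (hf''' : ∀ t ∈ Ioo a b, HasDerivAt f'' (f''' t) t)
    (hfin : {t ∈ Ioo a b | f''' t = 0}.Finite) : (phaseCuts f' f'' f''' a b).Finite := by
  have hfin₂ := finite_zeros_of_finite_zeros_hasDerivAt P.continuousOn_deriv₂ hf''' hfin
  have hfin₁ := finite_zeros_of_finite_zeros_hasDerivAt P.continuousOn_deriv P.hasDerivAt_deriv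
    (hfin₂.subset fun t ht => ⟨Ioo_subset_Icc_self ht.1, ht.2⟩)
  refine (hfin₁.union (hfin₂.union hfin)).subset ?_
  rintro t ⟨ht, h0⟩
  exact h0.imp (⟨Ioo_subset_Icc_self ht, ·⟩) (.imp (⟨Ioo_subset_Icc_self ht, ·⟩) (⟨ht, ·⟩))

lemma finite_nonstationaryCuts (P : IsPhase f f' f'' a b)
    (hf''' : ∀ t ∈ Ioo a b, HasDerivAt f'' (f''' t) t)
    (hfin : {t ∈ Ioo a b | f''' t = 0}.Finite) : (nonstationaryCuts f' f'' f''' a b).Finite :=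
  (((P.finite_phaseCuts hf''' hfin).insert b).insert a).subset nonstationaryCuts_subset

lemma oscBound_of_disjoint_phaseCuts {c d : ℝ} (P : IsPhase f f' f'' a b)
    (hf''' : ∀ t ∈ Ioo a b, HasDerivAt f'' (f''' t) t) (hac : a ≤ c) (hcd : c < d) (hdb : d ≤ b)
    (hdisj : Disjoint (phaseCuts f' f'' f''' a b) (Ioo c d)) :
    OscBound f c d (3 * ((∫ t in c..d, phaseDensity f' f'' t) + (1 / |f' c| + 1 / |f' d|))) := by
  have hsub : Ioo c d ⊆ Ioo a b := Ioo_subset_Ioo hac hdb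
  have hne : ∀ t ∈ Ioo c d, f' t ≠ 0 ∧ f'' t ≠ 0 ∧ f''' t ≠ 0 := fun t ht => by
    simpa only [phaseCuts, mem_ofPred_eq, hsub ht, true_and, not_or] using
      disjoint_right.1 hdisj ht
  have Q := P.mono hac hdb
  refine Q.oscBound_of_ne_zero hcd (fun t ht => (hne t ht).1) (fun t ht => (hne t ht).2.1) ?_
  exact (strictMonoOn_or_strictAntiOn_of_hasDerivAt_ne_zero Q.continuousOn_deriv₂
    (fun t ht => hf''' t (hsub ht)) fun t ht => (hne t ht).2.2).imp
      StrictMonoOn.monotoneOn StrictAntiOn.antitoneOn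

lemma oscBound_of_finite_phaseCuts (P : IsPhase f f' f'' a b)
    (hf''' : ∀ t ∈ Ioo a b, HasDerivAt f'' (f''' t) t) (hab : a < b)
    (hfin : (phaseCuts f' f'' f''' a b).Finite) :
    OscBound f a b (3 * ((∫ t in a..b, phaseDensity f' f'' t) + (1 / |f' a| + 1 / |f' b| +
      2 * ∑ᶠ z ∈ phaseCuts f' f'' f''' a b, 1 / |f' z|))) := by
  set K := phaseCuts f' f'' f''' a b
  have hglued : OscBound f a b (3 * ((∫ t in a..b, phaseDensity f' f'' t) +
      (1 / |f' a| + 1 / |f' b| + 2 * ∑ᶠ z ∈ K ∩ Ioo a b, 1 / |f' z|))) := by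
    refine icc_induction_of_finite_cuts (p := fun c d => OscBound f c d
      (3 * ((∫ t in c..d, phaseDensity f' f'' t) +
        (1 / |f' c| + 1 / |f' d| + 2 * ∑ᶠ z ∈ K ∩ Ioo c d, 1 / |f' z|)))) hfin hab ?_ ?_
    · intro c d hac hcd hdb hdisj
      simpa only [hdisj.inter_eq, finsum_mem_empty, mul_zero, add_zero] using
        P.oscBound_of_disjoint_phaseCuts hf''' hac hcd hdb hdisj
    · intro c d z hz hac hcz hzd hdb hleft hright
      have Q := P.mono hac hdb
      refine (hleft.add Q.continuousOn hcz.le hzd.le hright).mono (le_of_eq ?_)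
      rw [finsum_mem_inter_Ioo_eq_add hfin _ hz hcz hzd,
        ← integral_phaseDensity_add Q.continuousOn_deriv Q.continuousOn_deriv₂ hcz.le hzd.le]
      ring
  have hK : K ∩ Ioo a b = K := inter_eq_left.2 fun z hz => hz.1
  rwa [hK] at hglued

lemma oscBound (P : IsPhase f f' f'' a b) (hf''' : ∀ t ∈ Ioo a b, HasDerivAt f'' (f''' t) t)
    (hab : a ≤ b) (hfin : {t ∈ Ioo a b | f''' t = 0}.Finite) :
    OscBound f a b (6 * ((∫ t in a..b, phaseDensity f' f'' t) +
      min (b - a) (∑ᶠ x ∈ nonstationaryCuts f' f'' f''' a b, 1 / |f' x|))) := by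
  have hweight : ∀ x, 0 ≤ 1 / |f' x| := fun x => by positivity
  have hsum : ∀ s : Set ℝ, 0 ≤ ∑ᶠ x ∈ s, 1 / |f' x| := fun s =>
    finsum_nonneg fun x => finsum_nonneg fun _ => hweight x
  have hD := integral_phaseDensity_nonneg (f' := f') (f'' := f'') hab
  rcases le_total (b - a) (∑ᶠ x ∈ nonstationaryCuts f' f'' f''' a b, 1 / |f' x|) with hle | hge
  · rw [min_eq_left hle]
    exact (OscBound.length f a b).mono (by linarith)
  rw [min_eq_right hge]
  rcases hab.eq_or_lt with rfl | hab
  · exact (OscBound.length f a a).mono (by linarith [hsum (nonstationaryCuts f' f'' f''' a a)])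
  have hK := P.finite_phaseCuts hf''' hfin
  refine (P.oscBound_of_finite_phaseCuts hf''' hab hK).mono ?_
  rw [finsum_nonstationaryCuts hab hK]
  linarith [hweight a, hweight b]

end IsPhase

section ContDiffOn

variable {E : Type*} [NormedAddCommGroup E] [NormedSpace ℝ E] {g : ℝ → E} {a b : ℝ} {n : ℕ}

lemma continuousOn_iteratedDerivWithin_Icc {m : ℕ} (hg : ContDiffOn ℝ n g (Icc a b)) (hmn : m ≤ n)
    (hab : a ≤ b) : ContinuousOn (iteratedDerivWithin m g (Icc a b)) (Icc a b) := by
  rcases hab.eq_or_lt with rfl | hab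
  · rw [Icc_self]
    exact continuousOn_singleton _ _
  · exact hg.continuousOn_iteratedDerivWithin (by exact_mod_cast hmn) (uniqueDiffOn_Icc hab)

lemma hasDerivAt_iteratedDerivWithin_Icc {m : ℕ} (hg : ContDiffOn ℝ n g (Icc a b)) (hmn : m < n) :
    ∀ t ∈ Ioo a b, HasDerivAt (iteratedDerivWithin m g (Icc a b))
      (iteratedDerivWithin (m + 1) g (Icc a b) t) t := by
  intro t ht
  rw [iteratedDerivWithin_succ]
  exact (hg.differentiableOn_iteratedDerivWithin (by exact_mod_cast hmn)
    (uniqueDiffOn_Icc (ht.1.trans ht.2)) t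
      (Ioo_subset_Icc_self ht)).hasDerivWithinAt.hasDerivAt (Icc_mem_nhds ht.1 ht.2)

end ContDiffOn

lemma isPhase_iteratedDerivWithin {f : ℝ → ℝ} {a b : ℝ} (hab : a ≤ b)
    (hf : ContDiffOn ℝ 2 f (Icc a b)) :
    IsPhase f (iteratedDerivWithin 1 f (Icc a b)) (iteratedDerivWithin 2 f (Icc a b)) a b where
  continuousOn := hf.continuousOn
  continuousOn_deriv := continuousOn_iteratedDerivWithin_Icc hf one_le_two hab
  continuousOn_deriv₂ := continuousOn_iteratedDerivWithin_Icc hf le_rfl hab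
  hasDerivAt := by simpa using hasDerivAt_iteratedDerivWithin_Icc hf zero_lt_two
  hasDerivAt_deriv := hasDerivAt_iteratedDerivWithin_Icc hf one_lt_two

theorem stmt2_general {E : Type*} [NormedAddCommGroup E] [NormedSpace ℂ E] [CompleteSpace E]
    {f f' f'' f''' : ℝ → ℝ} {φ φ' : ℝ → E} {a b : ℝ} (hab : a ≤ b) (P : IsPhase f f' f'' a b)
    (hf''' : ∀ t ∈ Ioo a b, HasDerivAt f'' (f''' t) t)
    (hfin : {t ∈ Ioo a b | f''' t = 0}.Finite) (hφ : ContinuousOn φ (Icc a b))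
    (hφ' : ∀ t ∈ Ioo a b, HasDerivAt φ (φ' t) t) (hφint : IntervalIntegrable φ' volume a b) :
    (nonstationaryCuts f' f'' f''' a b).Finite ∧
    ‖∫ x in a..b, osc f x • φ x‖ ≤
      6 * (sSup ((fun x => ‖φ x‖) '' Icc a b) + ∫ x in a..b, ‖φ' x‖) *
        ((∫ x in a..b, phaseDensity f' f'' x) +
          min (b - a) (∑ᶠ x ∈ nonstationaryCuts f' f'' f''' a b, 1 / |f' x|)) := by
  refine ⟨P.finite_nonstationaryCuts hf''' hfin, ?_⟩
  have hosc := P.oscBound hf''' hab hfin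
  have hbound := norm_integral_smul_le_of_norm_primitive_le hab (continuousOn_osc P.continuousOn)
    (fun x hx => hosc le_rfl hx.1 hx.2) hφ hφ' hφint
  rwa [mul_right_comm] at hbound

/-- **Theorem 1.2.** There is a universal constant `B > 0` with the following property. Let
`f : [a,b] → ℝ` be `C³` with `{x ∈ [a,b] : f'''(x) = 0}` finite, and let `φ : [a,b] → ℂ` be
`C¹`. Let `J` be the set of `x ∈ [a,b]` with `f'(x) ≠ 0` and (`x = a` or `x = b` or
`f''(x) = 0` or `f'''(x) = 0`). Then `J` is finite and
`|∫_a^b e^{i f} φ| ≤ B (‖φ‖_∞ + ‖φ'‖_{L¹})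
  (∫_a^b min(1, |f''|/(f')²) + min(b-a, Σ_{x∈J} 1/|f'(x)|))`.
Here `|f''(x)|/(f'(x))²` is interpreted as `+∞` (so the min is `1`) where `f'(x) = 0`; the sum
over `J` is a `finsum`, equal to `0` when `J` is empty. -/
theorem stmt2 :
    ∃ B : ℝ, 0 < B ∧
      ∀ (a b : ℝ), a ≤ b →
      ∀ f : ℝ → ℝ, ContDiffOn ℝ 3 f (Icc a b) →
      {x ∈ Icc a b | iteratedDerivWithin 3 f (Icc a b) x = 0}.Finite →
      ∀ φ : ℝ → ℂ, ContDiffOn ℝ 1 φ (Icc a b) →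
      {x ∈ Icc a b | iteratedDerivWithin 1 f (Icc a b) x ≠ 0 ∧
          (x = a ∨ x = b ∨ iteratedDerivWithin 2 f (Icc a b) x = 0 ∨
            iteratedDerivWithin 3 f (Icc a b) x = 0)}.Finite ∧
      ‖∫ x in a..b, Complex.exp (Complex.I * (f x : ℂ)) * φ x‖ ≤
        B * (sSup ((fun x => ‖φ x‖) '' Icc a b) + ∫ x in a..b, ‖derivWithin φ (Icc a b) x‖) *
        ((∫ x in a..b,
            if iteratedDerivWithin 1 f (Icc a b) x = 0 then (1 : ℝ)
            else min 1 (|iteratedDerivWithin 2 f (Icc a b) x| /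
              (iteratedDerivWithin 1 f (Icc a b) x) ^ 2)) +
          min (b - a)
            (∑ᶠ x ∈ {x ∈ Icc a b | iteratedDerivWithin 1 f (Icc a b) x ≠ 0 ∧
                (x = a ∨ x = b ∨ iteratedDerivWithin 2 f (Icc a b) x = 0 ∨
                  iteratedDerivWithin 3 f (Icc a b) x = 0)},
              1 / |iteratedDerivWithin 1 f (Icc a b) x|)) := by
  refine ⟨6, by norm_num, fun a b hab f hf hfin φ hφ => ?_⟩
  have hφint : IntervalIntegrable (derivWithin φ (Icc a b)) volume a b := by
    rw [← iteratedDerivWithin_one]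
    exact (continuousOn_iteratedDerivWithin_Icc hφ le_rfl hab).intervalIntegrable_of_Icc hab
  exact stmt2_general hab (isPhase_iteratedDerivWithin hab (hf.of_le (by norm_num)))
    (hasDerivAt_iteratedDerivWithin_Icc hf (Nat.lt_succ_self 2))
    (hfin.subset fun t ht => ⟨Ioo_subset_Icc_self ht.1, ht.2⟩) hφ.continuousOn
    (fun t ht => (hφ.differentiableOn one_ne_zero t
      (Ioo_subset_Icc_self ht)).hasDerivWithinAt.hasDerivAt (Icc_mem_nhds ht.1 ht.2)) hφint
end
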